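/- arXiv:1609.08751 — 2 statements merged into one kernel-verified Lean document; each statement's English description precedes it below -/
import Mathlib

section
/- Let d ≥ 2 and λ ∈ [0,1). With W(x) = F(x) − F(T x) for x ∈ Δ, define g : [0,∞) → ℝ by g(t) = inf { W(x) : x ∈ Δ, ‖x − x*‖ ≥ t }. Then g is non-decreasing, non-negative, continuous, and positive definite: g(t) = 0 if and only if t = 0. -/
noncomputable section

open Metric Set Filter

/-- Euclidean space `ℝ^d` with `d = d' + 2 ≥ 2`. -/
abbrev Euc (d : ℕ) := EuclideanSpace ℝ (Fin (d + 2))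

/-- The standard basis vectors. -/
def e (d : ℕ) (j : Fin (d + 2)) : Euc d := EuclideanSpace.single j 1

/-- The Douglas–Rachford operator for the unit sphere and the line
`L_λ = {t e₁ + λ e₂}`, given by its explicit formula
`T x = (x₁/‖x‖) e₁ + ((1 − 1/‖x‖) x₂ + λ) e₂ + (1 − 1/‖x‖) ∑_{j=3}^d x_j e_j`. -/
def DR (d : ℕ) (lam : ℝ) (x : Euc d) : Euc d :=
  (x 0 / ‖x‖) • e d 0 + ((1 - 1 / ‖x‖) * x 1 + lam) • e d 1 +
    ∑ j ∈ Finset.univ.filter (fun j : Fin (d + 2) => 2 ≤ (j : ℕ)),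
      ((1 - 1 / ‖x‖) * x j) • e d j

/-- The intersection point `x* = √(1−λ²) e₁ + λ e₂`. -/
def xStar (d : ℕ) (lam : ℝ) : Euc d := Real.sqrt (1 - lam ^ 2) • e d 0 + lam • e d 1

/-- The Lyapunov-type function of Benoist:
`F(x) = ½‖x − λe₂‖² − λ log(1 + √(1 − x₁²)) + λ√(1 − x₁²) + (λ−1) log x₁`. -/
def F (d : ℕ) (lam : ℝ) (x : Euc d) : ℝ :=
  (1 / 2) * ‖x - lam • e d 1‖ ^ 2 - lam * Real.log (1 + Real.sqrt (1 - (x 0) ^ 2)) +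
    lam * Real.sqrt (1 - (x 0) ^ 2) + (lam - 1) * Real.log (x 0)

/-- `Δ = {x : 0 < x₁ ≤ 1}`. -/
def Delta (d : ℕ) : Set (Euc d) := {x | 0 < x 0 ∧ x 0 ≤ 1}

/-- `W(x) = F(x) − F(T x)`. -/
def W (d : ℕ) (lam : ℝ) (x : Euc d) : ℝ := F d lam x - F d lam (DR d lam x)

/-- `g(t) = inf { W(x) : x ∈ Δ, ‖x − x*‖ ≥ t }`. -/
def g (d : ℕ) (lam : ℝ) (t : ℝ) : ℝ :=
  sInf {w : ℝ | ∃ x : Euc d, x ∈ Delta d ∧ t ≤ ‖x - xStar d lam‖ ∧ w = W d lam x}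

/-!
On `Δ`, put `a = x₁` and `b = x₁ / ‖x‖`, the first coordinates of `x` and `T x`. Since `x₂` is at
most `‖x‖ √(1 - b²)`, the decrease `W x` is bounded below by
`gap λ a b = D(a, b) + (√(1 - b²) - λ)² / 2`, where `D` is the Bregman divergence of the part of `F`
depending on `x₁` only. If `a = b` and `√(1 - b²) = λ`, then `‖x‖ = 1` and `W x = ‖x - x*‖² / 2`.
Otherwise the gap is positive: for `√(1 - b²) ≥ λ` and `a ≠ b` because `D > 0`; for `a < b` because
the gap increases with `b`; for `a > b` because the derivative of the one-variable part is
quasiconcave, which reduces the claim to `a = 1`, where the gap is an explicit quadratic polynomial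
in `λ`.

Moreover `W` extends continuously to the closed slab `0 ≤ x₁ ≤ 1` minus the origin, where it is
still positive off `x*` and has compact sublevel sets. Compactness gives the positivity of `g` and
its lower semicontinuity; upper semicontinuity holds because every point can be pushed slightly away
from `x*`.
-/

open Real Topology

section InfAbove

variable {X : Type*} {V φ : X → ℝ} {D S : Set X} {t : ℝ}

/-- The infimum of `V` over the part of `D` on which `φ ≥ t`, as a function of `t`. The function
`g` of the theorem is the instance `V = W`, `φ = ‖· - x*‖`, `D = Δ`. -/
def infAbove (V φ : X → ℝ) (D : Set X) (t : ℝ) : ℝ :=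
  sInf (V '' {x ∈ D | t ≤ φ x})

lemma infAbove_le (hV : BddBelow (V '' D)) {x : X} (hx : x ∈ D) (ht : t ≤ φ x) :
    infAbove V φ D t ≤ V x :=
  csInf_le (hV.mono (image_mono (sep_subset _ _))) (mem_image_of_mem V ⟨hx, ht⟩)

lemma le_infAbove (hφ : ∃ x ∈ D, t ≤ φ x) {m : ℝ} (hm : ∀ x ∈ D, t ≤ φ x → m ≤ V x) :
    m ≤ infAbove V φ D t :=
  le_csInf (Set.Nonempty.image V hφ) (forall_mem_image.2 fun x hx => hm x hx.1 hx.2)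

lemma infAbove_mono (hV : BddBelow (V '' D)) (hφ : ∀ t, ∃ x ∈ D, t ≤ φ x) :
    Monotone (infAbove V φ D) := fun _ t hst =>
  le_infAbove (hφ t) fun _ hx ht => infAbove_le hV hx (hst.trans ht)

lemma upperSemicontinuous_infAbove (hV : BddBelow (V '' D)) (hφ : ∀ t, ∃ x ∈ D, t ≤ φ x)
    (hDD : ∀ x ∈ D, ∀ ε > 0, ∃ y ∈ D, φ x < φ y ∧ V y < V x + ε) :
    UpperSemicontinuous (infAbove V φ D) := by
  intro t m hm
  obtain ⟨_, ⟨x, ⟨hx, hxt⟩, rfl⟩, hxm⟩ := exists_lt_of_csInf_lt (Set.Nonempty.image V (hφ t)) hm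
  obtain ⟨y, hy, hxy, hVy⟩ := hDD x hx (m - V x) (sub_pos.2 hxm)
  filter_upwards [gt_mem_nhds (hxt.trans_lt hxy)] with u hu
  linarith [infAbove_le hV hy hu.le]

variable [TopologicalSpace X]

-- The compact set `{V ≤ M}` with `M < infAbove V φ D t` lies in the open set `{φ < t}`, hence also
-- in `{φ < u}` for all `u` near `t`.
lemma lowerSemicontinuous_infAbove (hφc : Continuous φ) (hV : BddBelow (V '' D))
    (hφ : ∀ t, ∃ x ∈ D, t ≤ φ x) (hDS : D ⊆ S) (hK : ∀ M, IsCompact {x ∈ S | V x ≤ M})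
    (hSD : ∀ x ∈ S, ∀ ε > 0, ∃ y ∈ D, φ x < φ y ∧ V y < V x + ε) :
    LowerSemicontinuous (infAbove V φ D) := by
  intro t m hm
  obtain ⟨M, hmM, hMt⟩ := exists_between hm
  have sublevel_lt : ∀ x ∈ {x ∈ S | V x ≤ M}, φ x < t := by
    rintro x ⟨hxS, hxM⟩
    by_contra! htx
    obtain ⟨y, hy, hxy, hVy⟩ := hSD x hxS _ (sub_pos.2 hMt)
    linarith [infAbove_le hV hy (htx.trans hxy.le)]
  have eventually_sublevel_lt : ∀ᶠ u in 𝓝 t, ∀ x ∈ {x ∈ S | V x ≤ M}, φ x < u :=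
    (hK M).eventually_forall_of_forall_eventually fun x hx =>
      (isOpen_lt (hφc.comp continuous_snd) continuous_fst).mem_nhds (sublevel_lt x hx)
  filter_upwards [eventually_sublevel_lt] with u hu
  refine hmM.trans_le (le_infAbove (hφ u) fun x hx hux => ?_)
  by_contra! hxM
  exact (hu x ⟨hDS hx, hxM.le⟩).not_ge hux

lemma continuous_infAbove (hφc : Continuous φ) (hV : BddBelow (V '' D))
    (hφ : ∀ t, ∃ x ∈ D, t ≤ φ x) (hDS : D ⊆ S) (hK : ∀ M, IsCompact {x ∈ S | V x ≤ M})
    (hSD : ∀ x ∈ S, ∀ ε > 0, ∃ y ∈ D, φ x < φ y ∧ V y < V x + ε) :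
    Continuous (infAbove V φ D) :=
  continuous_iff_lower_upperSemicontinuous.2
    ⟨lowerSemicontinuous_infAbove hφc hV hφ hDS hK hSD,
      upperSemicontinuous_infAbove hV hφ fun x hx => hSD x (hDS hx)⟩

lemma infAbove_pos (hφc : Continuous φ) (hφ : ∃ x ∈ D, t ≤ φ x) (hDS : D ⊆ S)
    (hVc : ContinuousOn V S) (hK : ∀ M, IsCompact {x ∈ S | V x ≤ M})
    (hpos : ∀ x ∈ S, t ≤ φ x → 0 < V x) : 0 < infAbove V φ D t := by
  obtain ⟨x₁, hx₁, htx₁⟩ := hφ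
  have hKt : IsCompact ({x ∈ S | V x ≤ V x₁} ∩ {x | t ≤ φ x}) :=
    (hK _).inter_right (isClosed_le continuous_const hφc)
  obtain ⟨z, ⟨⟨hzS, hzx₁⟩, htz⟩, hmin⟩ :=
    hKt.exists_isMinOn ⟨x₁, ⟨hDS hx₁, le_rfl⟩, htx₁⟩ (hVc.mono fun x hx => hx.1.1)
  refine (hpos z hzS htz).trans_le (le_infAbove ⟨x₁, hx₁, htx₁⟩ fun x hx htx => ?_)
  rcases le_total (V x) (V x₁) with h | h
  · exact hmin ⟨⟨hDS hx, h⟩, htx⟩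
  · exact hzx₁.trans h

end InfAbove

section Quasiconcave

lemma min_le_of_quasiconcaveOn {s : Set ℝ} {f : ℝ → ℝ} (hf : QuasiconcaveOn ℝ s f) {u v w : ℝ}
    (hu : u ∈ s) (hw : w ∈ s) (huv : u ≤ v) (hvw : v ≤ w) : min (f u) (f w) ≤ f v :=
  ((hf _).ordConnected.out ⟨hu, min_le_left _ _⟩ ⟨hw, min_le_right _ _⟩ ⟨huv, hvw⟩).2

lemma quasiconcaveOn_of_hasDerivAt {s : Set ℝ} (hs : Convex ℝ s) {f f' : ℝ → ℝ}
    (hf : ContinuousOn f s) (hf' : ∀ x ∈ interior s, HasDerivAt f (f' x) x)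
    (hsign : ∀ x ∈ interior s, ∀ y ∈ interior s, x ≤ y → 0 < f' y → 0 ≤ f' x) :
    QuasiconcaveOn ℝ s f := by
  intro r
  refine OrdConnected.convex ⟨?_⟩
  rintro u ⟨hu, hru⟩ w ⟨hw, hrw⟩ v ⟨huv, hvw⟩
  have huw : Icc u w ⊆ s := hs.ordConnected.out hu hw
  refine ⟨huw ⟨huv, hvw⟩, ?_⟩
  by_contra! hvr
  have huv' : u < v := huv.lt_of_ne fun h => (hvr.trans_le hru).ne (h ▸ rfl)
  have hvw' : v < w := hvw.lt_of_ne fun h => (hvr.trans_le hrw).ne (h ▸ rfl)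
  have hint : Ioo u w ⊆ interior s := interior_Icc (a := u) (b := w) ▸ interior_mono huw
  obtain ⟨x, hx, hfx⟩ := exists_hasDerivAt_eq_slope f f' huv'
    (hf.mono ((Icc_subset_Icc_right hvw).trans huw))
    fun x hx => hf' x (hint ⟨hx.1, hx.2.trans hvw'⟩)
  obtain ⟨y, hy, hfy⟩ := exists_hasDerivAt_eq_slope f f' hvw'
    (hf.mono ((Icc_subset_Icc_left huv).trans huw))
    fun y hy => hf' y (hint ⟨huv'.trans hy.1, hy.2⟩)
  have hx_neg : f' x < 0 :=
    hfx ▸ div_neg_of_neg_of_pos (sub_neg.2 (hvr.trans_le hru)) (sub_pos.2 huv')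
  have hy_pos : 0 < f' y := hfy ▸ div_pos (sub_pos.2 (hvr.trans_le hrw)) (sub_pos.2 hvw')
  exact hx_neg.not_ge (hsign x (hint ⟨hx.1, hx.2.trans hvw'⟩) y (hint ⟨huv'.trans hy.1, hy.2⟩)
    (hx.2.trans hy.1).le hy_pos)

end Quasiconcave

section Bregman

variable {f f' : ℝ → ℝ} {a b c : ℝ}

/-- The Bregman divergence of `f` at `a` from `b`: the error at `a` of the affine approximation of
`f` at `b`, where `f'` plays the role of the derivative of `f`. -/
def bregman (f f' : ℝ → ℝ) (a b : ℝ) : ℝ :=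
  f a - f b - f' b * (a - b)

@[simp]
lemma bregman_self (f f' : ℝ → ℝ) (b : ℝ) : bregman f f' b b = 0 := by
  simp [bregman]

lemma exists_bregman_sub_bregman_eq (hac : a < c) (hf : ContinuousOn f (Icc a c))
    (hf' : ∀ u ∈ Ioo a c, HasDerivAt f (f' u) u) (b : ℝ) :
    ∃ u ∈ Ioo a c, bregman f f' c b - bregman f f' a b = (f' u - f' b) * (c - a) := by
  obtain ⟨u, hu, hslope⟩ := exists_hasDerivAt_eq_slope f f' hac hf hf'
  refine ⟨u, hu, ?_⟩
  rw [eq_div_iff (sub_pos.2 hac).ne'] at hslope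
  unfold bregman
  linear_combination -hslope

lemma bregman_pos_of_lt (hab : a < b) (hf : ContinuousOn f (Icc a b))
    (hf' : ∀ u ∈ Ioo a b, HasDerivAt f (f' u) u) (hlt : ∀ u ∈ Ioo a b, f' u < f' b) :
    0 < bregman f f' a b := by
  obtain ⟨u, hu, h⟩ := exists_bregman_sub_bregman_eq hab hf hf' b
  rw [bregman_self] at h
  linarith [mul_neg_of_neg_of_pos (sub_neg.2 (hlt u hu)) (sub_pos.2 hab)]

lemma bregman_pos_of_gt (hba : b < a) (hf : ContinuousOn f (Icc b a))
    (hf' : ∀ u ∈ Ioo b a, HasDerivAt f (f' u) u) (hlt : ∀ u ∈ Ioo b a, f' b < f' u) :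
    0 < bregman f f' a b := by
  obtain ⟨u, hu, h⟩ := exists_bregman_sub_bregman_eq hba hf hf' b
  rw [bregman_self] at h
  linarith [mul_pos (sub_pos.2 (hlt u hu)) (sub_pos.2 hba)]

-- `bregman f f' · b` has derivative `f' - f' b`, which by quasiconcavity is first nonnegative and
-- then negative on `[b, c]`.
lemma min_zero_bregman_le_of_quasiconcaveOn (hf : ContinuousOn f (Icc b c))
    (hf' : ∀ u ∈ Ioo b c, HasDerivAt f (f' u) u) (hq : QuasiconcaveOn ℝ (Icc b c) f')
    (ha : a ∈ Icc b c) : min 0 (bregman f f' c b) ≤ bregman f f' a b := by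
  obtain ⟨hba, hac⟩ := ha
  have hb : b ∈ Icc b c := left_mem_Icc.2 (hba.trans hac)
  rcases hba.eq_or_lt with rfl | hba'
  · simp
  rcases hac.eq_or_lt with rfl | hac'
  · simp
  rcases le_or_gt (f' b) (f' a) with hle | hlt
  · obtain ⟨u, hu, h⟩ := exists_bregman_sub_bregman_eq hba'
      (hf.mono (Icc_subset_Icc_right hac)) (fun u hu => hf' u ⟨hu.1, hu.2.trans hac'⟩) b
    have hbu : f' b ≤ f' u := by
      simpa [hle] using min_le_of_quasiconcaveOn hq hb ⟨hba, hac⟩ hu.1.le hu.2.le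
    rw [bregman_self] at h
    exact (min_le_left _ _).trans (by nlinarith)
  · obtain ⟨u, hu, h⟩ := exists_bregman_sub_bregman_eq hac'
      (hf.mono (Icc_subset_Icc_left hba)) (fun u hu => hf' u ⟨hba'.trans hu.1, hu.2⟩) b
    have hua : f' u ≤ f' a := by
      simpa [hlt.not_ge] using
        min_le_of_quasiconcaveOn hq hb ⟨(hba'.trans hu.1).le, hu.2.le⟩ hba hu.1.le
    exact (min_le_right _ _).trans (by nlinarith)

end Bregman

section Semicircle

variable {u v : ℝ}

/-- The upper unit semicircle as a graph over `[-1, 1]`; it is `0` outside this interval. -/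
def semicircle (u : ℝ) : ℝ :=
  √(1 - u ^ 2)

lemma semicircle_nonneg (u : ℝ) : 0 ≤ semicircle u :=
  sqrt_nonneg _

lemma semicircle_le_one (u : ℝ) : semicircle u ≤ 1 :=
  sqrt_le_one.2 (sub_le_self _ (sq_nonneg u))

lemma semicircle_sq (h0 : 0 ≤ u) (h1 : u ≤ 1) : semicircle u ^ 2 = 1 - u ^ 2 :=
  sq_sqrt (sub_nonneg.2 (pow_le_one₀ h0 h1))

lemma semicircle_pos (h0 : 0 ≤ u) (h1 : u < 1) : 0 < semicircle u :=
  sqrt_pos.2 (sub_pos.2 (pow_lt_one₀ h0 h1 two_ne_zero))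

lemma semicircle_lt_one (h0 : 0 < u) : semicircle u < 1 :=
  (sqrt_lt' one_pos).2 (by nlinarith)

lemma semicircle_semicircle (h0 : 0 ≤ u) (h1 : u ≤ 1) : semicircle (semicircle u) = u := by
  rw [semicircle, semicircle_sq h0 h1, sub_sub_cancel, sqrt_sq h0]

lemma semicircle_strictAntiOn : StrictAntiOn semicircle (Icc 0 1) := fun _ hu _ hv huv =>
  sqrt_lt_sqrt (sub_nonneg.2 (pow_le_one₀ hv.1 hv.2)) (by nlinarith [hu.1])

@[fun_prop]
lemma continuous_semicircle : Continuous semicircle := by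
  unfold semicircle
  fun_prop

lemma hasDerivAt_semicircle (h0 : 0 ≤ u) (h1 : u < 1) :
    HasDerivAt semicircle (-u / semicircle u) u := by
  have hs := semicircle_pos h0 h1
  have hne : 1 - u ^ 2 ≠ 0 := (sub_pos.2 (pow_lt_one₀ h0 h1 two_ne_zero)).ne'
  refine (((hasDerivAt_pow 2 u).const_sub 1).sqrt hne).congr_deriv ?_
  rw [← semicircle]
  field_simp
  norm_num

lemma log_eq_semicircle (h0 : 0 < u) (h1 : u ≤ 1) :
    log u = (log (1 + semicircle u) + log (1 - semicircle u)) / 2 := by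
  have hs := semicircle_nonneg u
  have hs1 := semicircle_lt_one h0
  have hprod : (1 + semicircle u) * (1 - semicircle u) = u ^ 2 := by
    linear_combination -semicircle_sq h0.le h1
  rw [← log_mul (by linarith) (by linarith), hprod, log_pow]
  norm_num

/-- The `λ`-linear part of `F` along the first coordinate. -/
def arcLog (u : ℝ) : ℝ :=
  semicircle u - log (1 + semicircle u)

lemma arcLog_nonneg (u : ℝ) : 0 ≤ arcLog u := by
  have := log_le_sub_one_of_pos (x := 1 + semicircle u) (by linarith [semicircle_nonneg u])
  unfold arcLog
  linarith

lemma arcLog_le_one (u : ℝ) : arcLog u ≤ 1 := by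
  have := log_nonneg (x := 1 + semicircle u) (by linarith [semicircle_nonneg u])
  unfold arcLog
  linarith [semicircle_le_one u]

@[fun_prop]
lemma continuous_arcLog : Continuous arcLog :=
  continuous_semicircle.sub <| (continuous_semicircle.const_add 1).log fun u => by
    linarith [semicircle_nonneg u]

lemma hasDerivAt_arcLog (h0 : 0 ≤ u) (h1 : u < 1) :
    HasDerivAt arcLog (-u / (1 + semicircle u)) u := by
  have hs := semicircle_pos h0 h1
  have hd := hasDerivAt_semicircle h0 h1
  refine (hd.sub ((hd.const_add 1).log (by linarith))).congr_deriv ?_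
  field_simp
  ring

end Semicircle

section Profile

variable {lam a b u v : ℝ}

/-- The part of `F` that depends only on the first coordinate `u`. -/
def profile (lam u : ℝ) : ℝ :=
  u ^ 2 / 2 + lam * arcLog u + (lam - 1) * log u

/-- The derivative of `profile lam` on `(0, 1)`, extended continuously to `u = 1`. -/
def profileDeriv (lam u : ℝ) : ℝ :=
  semicircle u * (lam - semicircle u) / u

lemma continuousOn_profile (lam : ℝ) : ContinuousOn (profile lam) (Ioi 0) := by
  unfold profile
  have hlog : ContinuousOn log (Ioi 0) := continuousOn_log.mono fun u hu => (ne_of_gt hu)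
  fun_prop

lemma continuousOn_profileDeriv (lam : ℝ) : ContinuousOn (profileDeriv lam) (Ioi 0) :=
  ContinuousOn.div (by fun_prop) continuousOn_id fun _ hu => ne_of_gt hu

lemma hasDerivAt_profile (lam : ℝ) (h0 : 0 < u) (h1 : u < 1) :
    HasDerivAt (profile lam) (profileDeriv lam u) u := by
  refine ((((hasDerivAt_pow 2 u).div_const 2).add ((hasDerivAt_arcLog h0.le h1).const_mul lam)).add
    ((hasDerivAt_log h0.ne').const_mul (lam - 1))).congr_deriv ?_
  have hs := semicircle_pos h0.le h1
  have hsq : u ^ 2 = (1 - semicircle u) * (1 + semicircle u) := by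
    linear_combination semicircle_sq h0.le h1.le
  unfold profileDeriv
  field_simp
  push_cast
  linear_combination (2 * (1 + semicircle u) - 2 * lam) * hsq

lemma hasDerivAt_profileDeriv (lam : ℝ) (h0 : 0 < u) (h1 : u < 1) :
    HasDerivAt (profileDeriv lam)
      ((2 * semicircle u - lam - semicircle u ^ 3) / (semicircle u * u ^ 2)) u := by
  have hs := semicircle_pos h0.le h1
  have hd := hasDerivAt_semicircle h0.le h1
  refine ((hd.mul (hd.const_sub lam)).div (hasDerivAt_id u) h0.ne').congr_deriv ?_
  simp only [id, Pi.mul_apply]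
  field_simp
  linear_combination (2 * semicircle u - lam) * semicircle_sq h0.le h1.le

-- `(2 * s - lam - s ^ 3) / (1 - s) = (1 - lam) / (1 - s) - (1 - s - s ^ 2)` increases with `s`.
lemma two_mul_sub_sub_cube_nonneg_of_le {s t : ℝ} (hlam : lam ≤ 1) (hs : 0 ≤ s) (hst : s ≤ t)
    (ht : t < 1) (hpos : 0 < 2 * s - lam - s ^ 3) : 0 ≤ 2 * t - lam - t ^ 3 := by
  have hs1 : 0 < 1 - s := by linarith
  have ht1 : 0 < 1 - t := by linarith
  have hdiff : 0 ≤ (t - s) * ((1 - lam) + (1 - s) * (1 - t) * (1 + s + t)) :=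
    mul_nonneg (by linarith) (add_nonneg (by linarith)
      (mul_nonneg (mul_nonneg hs1.le ht1.le) (by linarith)))
  have hmul : 0 ≤ (1 - s) * (2 * t - lam - t ^ 3) := by
    linarith [mul_pos ht1 hpos]
  exact nonneg_of_mul_nonneg_right hmul hs1

lemma quasiconcaveOn_profileDeriv (hlam : lam ≤ 1) :
    QuasiconcaveOn ℝ (Ioc 0 1) (profileDeriv lam) := by
  refine quasiconcaveOn_of_hasDerivAt (convex_Ioc 0 1)
    ((continuousOn_profileDeriv lam).mono fun u hu => hu.1)
    (f' := fun u => (2 * semicircle u - lam - semicircle u ^ 3) / (semicircle u * u ^ 2)) ?_ ?_ <;>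
    rw [interior_Ioc]
  · exact fun u hu => hasDerivAt_profileDeriv lam hu.1 hu.2
  · intro u hu v hv huv hpos
    have hden : 0 < semicircle v * v ^ 2 :=
      mul_pos (semicircle_pos hv.1.le hv.2) (pow_pos hv.1 2)
    have hvu : semicircle v ≤ semicircle u :=
      semicircle_strictAntiOn.antitoneOn (Ioo_subset_Icc_self hu) (Ioo_subset_Icc_self hv) huv
    exact div_nonneg (two_mul_sub_sub_cube_nonneg_of_le hlam (semicircle_nonneg v) hvu
      (semicircle_lt_one hu.1) ((div_pos_iff_of_pos_right hden).1 hpos))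
      (mul_nonneg (semicircle_nonneg u) (sq_nonneg u))

lemma profileDeriv_lt_of_le_semicircle_right (h0 : 0 < u) (huv : u < v) (hv : v ≤ 1)
    (hlam : lam ≤ semicircle v) : profileDeriv lam u < profileDeriv lam v := by
  have hs : semicircle v < semicircle u :=
    semicircle_strictAntiOn ⟨h0.le, huv.le.trans hv⟩ ⟨(h0.trans huv).le, hv⟩ huv
  have hv0 := semicircle_nonneg v
  have hnum : semicircle v * (semicircle v - lam) < semicircle u * (semicircle u - lam) := by
    nlinarith
  have hdiv := div_lt_div₀ hnum huv.le
    ((mul_nonneg hv0 (sub_nonneg.2 hlam)).trans hnum.le) h0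
  have hneg : ∀ w, profileDeriv lam w = -(semicircle w * (semicircle w - lam) / w) := fun w => by
    unfold profileDeriv
    ring
  rw [hneg, hneg]
  exact neg_lt_neg hdiv

lemma profileDeriv_lt_of_le_semicircle_left (h0 : 0 < u) (huv : u < v) (hv : v < 1)
    (hlam : lam ≤ semicircle u) : profileDeriv lam u < profileDeriv lam v := by
  rcases le_or_gt lam (semicircle v) with h | h
  · exact profileDeriv_lt_of_le_semicircle_right h0 huv hv.le h
  · calc profileDeriv lam u
      _ ≤ 0 := div_nonpos_of_nonpos_of_nonneg
          (mul_nonpos_of_nonneg_of_nonpos (semicircle_nonneg u) (sub_nonpos.2 hlam)) h0.le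
      _ < profileDeriv lam v := div_pos
          (mul_pos (semicircle_pos (h0.trans huv).le hv) (sub_pos.2 h)) (h0.trans huv)

lemma bregman_profile_pos (ha0 : 0 < a) (ha1 : a ≤ 1) (hb0 : 0 < b) (hb1 : b ≤ 1) (hab : a ≠ b)
    (hlam : lam ≤ semicircle b) : 0 < bregman (profile lam) (profileDeriv lam) a b := by
  rcases hab.lt_or_gt with h | h
  · exact bregman_pos_of_lt h ((continuousOn_profile lam).mono fun u hu => ha0.trans_le hu.1)
      (fun u hu => hasDerivAt_profile lam (ha0.trans hu.1) (hu.2.trans_le hb1))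
      fun u hu => profileDeriv_lt_of_le_semicircle_right (ha0.trans hu.1) hu.2 hb1 hlam
  · exact bregman_pos_of_gt h ((continuousOn_profile lam).mono fun u hu => hb0.trans_le hu.1)
      (fun u hu => hasDerivAt_profile lam (hb0.trans hu.1) (hu.2.trans_le ha1))
      fun u hu => profileDeriv_lt_of_le_semicircle_left hb0 hu.1 (hu.2.trans_le ha1) hlam

end Profile

section Gap

variable {lam a b : ℝ}

/-- The planar part of the decrease `W`: the decrease of `F` when the first coordinate moves from
`a` to `b` and `x` lies in the half-plane spanned by `e₁` and `e₂` with `x₂ ≥ 0`. -/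
def gap (lam a b : ℝ) : ℝ :=
  bregman (profile lam) (profileDeriv lam) a b + (semicircle b - lam) ^ 2 / 2

lemma gap_self (lam b : ℝ) : gap lam b b = (semicircle b - lam) ^ 2 / 2 := by
  simp [gap]

lemma continuousOn_gap_right (lam a : ℝ) : ContinuousOn (gap lam a) (Ioi 0) := by
  have hf := continuousOn_profile lam
  have hf' := continuousOn_profileDeriv lam
  unfold gap bregman
  fun_prop

lemma hasDerivAt_gap_right (lam a : ℝ) (h0 : 0 < b) (h1 : b < 1) :
    HasDerivAt (gap lam a) (((2 * semicircle b - lam - semicircle b ^ 3) * (b - a)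
      + (lam - semicircle b) * b ^ 3) / (semicircle b * b ^ 2)) b := by
  have hs := semicircle_pos h0.le h1
  have hbregman := ((hasDerivAt_profile lam h0 h1).const_sub (profile lam a)).sub
    ((hasDerivAt_profileDeriv lam h0 h1).mul ((hasDerivAt_id b).const_sub a))
  have hsq := (((hasDerivAt_semicircle h0.le h1).sub_const lam).pow 2).div_const 2
  refine (hbregman.add hsq).congr_deriv ?_
  simp only [id]
  field_simp
  ring

lemma gap_right_deriv_pos (hlam : lam < 1) (ha0 : 0 ≤ a) (hab : a < b) (hb1 : b < 1)
    (hb : semicircle b < lam) :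
    0 < ((2 * semicircle b - lam - semicircle b ^ 3) * (b - a)
      + (lam - semicircle b) * b ^ 3) / (semicircle b * b ^ 2) := by
  have hb0 : 0 < b := ha0.trans_lt hab
  have hs := semicircle_pos hb0.le hb1
  have hs1 := semicircle_lt_one hb0
  refine div_pos ?_ (by positivity)
  rcases le_or_gt 0 (2 * semicircle b - lam - semicircle b ^ 3) with h | h
  · exact add_pos_of_nonneg_of_pos (mul_nonneg h (sub_pos.2 hab).le)
      (mul_pos (sub_pos.2 hb) (pow_pos hb0 3))
  · have hprod : 0 < b * (semicircle b * (1 - lam * semicircle b)) :=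
      mul_pos hb0 (mul_pos hs (by nlinarith [hs1]))
    have hab_le : (2 * semicircle b - lam - semicircle b ^ 3) * b
        ≤ (2 * semicircle b - lam - semicircle b ^ 3) * (b - a) := by nlinarith
    have hcollapse : (2 * semicircle b - lam - semicircle b ^ 3) * b + (lam - semicircle b) * b ^ 3
        = b * (semicircle b * (1 - lam * semicircle b)) := by
      linear_combination (lam - semicircle b) * b * semicircle_sq hb0.le hb1.le
    linarith

-- `gap lam a` increases on `[max a √(1 - lam²), 1]`, and it is nonnegative at the left endpoint.
lemma gap_pos_of_lt (hlam : lam < 1) (ha0 : 0 < a) (hab : a < b) (hb1 : b ≤ 1)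
    (hb : semicircle b < lam) : 0 < gap lam a b := by
  have hlam0 : 0 < lam := (semicircle_nonneg b).trans_lt hb
  have hstar : semicircle (semicircle lam) = lam := semicircle_semicircle hlam0.le hlam.le
  have hmem : semicircle lam ∈ Icc (0 : ℝ) 1 := ⟨semicircle_nonneg lam, semicircle_le_one lam⟩
  have hstar_lt : semicircle lam < b :=
    (semicircle_strictAntiOn.lt_iff_gt ⟨(ha0.trans hab).le, hb1⟩ hmem).1 (by rwa [hstar])
  set k := max a (semicircle lam)
  have hkb : k < b := max_lt hab hstar_lt
  have hk0 : 0 < k := ha0.trans_le (le_max_left _ _)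
  have hmono : StrictMonoOn (gap lam a) (Icc k b) := by
    refine strictMonoOn_of_deriv_pos (convex_Icc k b)
      ((continuousOn_gap_right lam a).mono fun u hu => hk0.trans_le hu.1) fun u hu => ?_
    rw [interior_Icc] at hu
    have hu1 := hu.2.trans_le hb1
    rw [(hasDerivAt_gap_right lam a (hk0.trans hu.1) hu1).deriv]
    refine gap_right_deriv_pos hlam ha0.le ((le_max_left _ _).trans_lt hu.1) hu1 ?_
    conv_rhs => rw [← hstar]
    exact semicircle_strictAntiOn hmem ⟨(hk0.trans hu.1).le, hu1.le⟩
      ((le_max_right _ _).trans_lt hu.1)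
  suffices 0 ≤ gap lam a k from
    this.trans_lt (hmono (left_mem_Icc.2 hkb.le) (right_mem_Icc.2 hkb.le) hkb)
  rcases le_or_gt (semicircle lam) a with h | h
  · rw [show k = a from max_eq_left h, gap_self]
    positivity
  · rw [show k = semicircle lam from max_eq_right h.le]
    exact add_nonneg (bregman_profile_pos ha0 (hab.le.trans hb1) (ha0.trans h) hmem.2 h.ne
      hstar.ge).le (by positivity)

end Gap

section EntropyExcess

variable {c m : ℝ}

/-- The excess of the negative binary entropy `((1 + c) log (1 + c) + (1 - c) log (1 - c)) / 2`
over its quadratic Taylor polynomial. -/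
def entropyExcess (c : ℝ) : ℝ :=
  ((1 + c) * log (1 + c) + (1 - c) * log (1 - c)) / 2 - c ^ 2 / 2

/-- The excess of `c / √(1 - c²)` over `artanh c`. -/
def slopeExcess (c : ℝ) : ℝ :=
  c / semicircle c - (log (1 + c) - log (1 - c)) / 2

/-- The value `gap (c + m) 1 √(1 - c²)`, which is a quadratic polynomial in `m`. -/
def gapAtOne (c m : ℝ) : ℝ :=
  entropyExcess c - m * slopeExcess c + m ^ 2 / 2

lemma hasSum_binary_entropy (hc : |c| < 1) :
    HasSum (fun k : ℕ => c ^ (2 * k + 2) * (1 / (2 * k + 1) - 1 / (2 * k + 2)))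
      (((1 + c) * log (1 + c) + (1 - c) * log (1 - c)) / 2) := by
  have hc_sq : |c ^ 2| < 1 := by
    rw [abs_pow]
    exact pow_lt_one₀ (abs_nonneg c) hc two_ne_zero
  obtain ⟨hc_neg, hc_pos⟩ := abs_lt.1 hc
  have hlog : log (1 - c ^ 2) = log (1 + c) + log (1 - c) := by
    rw [← log_mul (by linarith) (by linarith)]
    ring_nf
  have hvalue : ((1 + c) * log (1 + c) + (1 - c) * log (1 - c)) / 2
      = c / 2 * (log (1 + c) - log (1 - c)) - -log (1 - c ^ 2) / 2 := by
    rw [hlog]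
    ring
  rw [hvalue]
  refine (((hasSum_log_sub_log_of_abs_lt_one hc).mul_left (c / 2)).sub
    ((hasSum_pow_div_log_of_abs_lt_one hc_sq).div_const 2)).congr_fun fun k => ?_
  field_simp
  ring

lemma le_entropyExcess (hc : |c| < 1) : c ^ 4 / 12 + c ^ 6 / 30 ≤ entropyExcess c := by
  have hterm : ∀ k : ℕ, 0 ≤ c ^ (2 * k + 2) * (1 / (2 * k + 1 : ℝ) - 1 / (2 * k + 2)) := fun k =>
    mul_nonneg (Even.pow_nonneg ⟨k + 1, by ring⟩ c)
      (sub_nonneg.2 (one_div_le_one_div_of_le (by positivity) (by linarith)))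
  have hsum := sum_le_hasSum (Finset.range 3) (fun k _ => hterm k) (hasSum_binary_entropy hc)
  simp only [Finset.sum_range_succ, Finset.range_zero, Finset.sum_empty] at hsum
  push_cast at hsum
  unfold entropyExcess
  linarith

lemma add_pow_three_div_three_le_half_log (h0 : 0 ≤ c) (h1 : c < 1) :
    c + c ^ 3 / 3 ≤ (log (1 + c) - log (1 - c)) / 2 := by
  have hsum := sum_le_hasSum (Finset.range 2) (fun k _ => by positivity)
    (hasSum_log_sub_log_of_abs_lt_one (abs_lt.2 ⟨by linarith, h1⟩))
  simp only [Finset.sum_range_succ, Finset.range_zero, Finset.sum_empty] at hsum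
  push_cast at hsum
  linarith

lemma inv_semicircle_le (h0 : 0 ≤ c) (h1 : c ≤ 3 / 4) :
    1 / semicircle c ≤ 1 + 14 / 15 * c ^ 2 := by
  have hs := semicircle_pos h0 (by linarith)
  have hc : c ^ 2 ≤ 9 / 16 := by nlinarith
  rw [div_le_iff₀ hs]
  refine (one_le_sq_iff₀ (by positivity)).1 ?_
  rw [mul_pow, semicircle_sq h0 (by linarith)]
  nlinarith [mul_nonneg (sq_nonneg c) (sub_nonneg.2 hc),
    mul_nonneg (sq_nonneg (c ^ 2)) (sub_nonneg.2 hc)]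

lemma slopeExcess_le (h0 : 0 ≤ c) (h1 : c ≤ 3 / 4) : slopeExcess c ≤ 3 / 5 * c ^ 3 := by
  have hinv := mul_le_mul_of_nonneg_left (inv_semicircle_le h0 h1) h0
  rw [mul_one_div] at hinv
  unfold slopeExcess
  linarith [add_pow_three_div_three_le_half_log h0 (by linarith)]

lemma gapAtOne_pos_of_le (h0 : 0 < c) (h1 : c ≤ 3 / 4) (hm : 0 ≤ m) :
    0 < gapAtOne c m := by
  have hB := le_entropyExcess (abs_lt.2 ⟨by linarith, by linarith⟩ : |c| < 1)
  have hJ := mul_le_mul_of_nonneg_left (slopeExcess_le h0.le h1) hm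
  have hdisc : (3 / 5 * c ^ 3) ^ 2 < 2 * (c ^ 4 / 12 + c ^ 6 / 30) := by
    have hc : c ^ 2 ≤ 9 / 16 := by nlinarith
    nlinarith [mul_le_mul_of_nonneg_left hc (pow_pos h0 4).le, pow_pos h0 4]
  unfold gapAtOne
  linarith [sq_nonneg (m - 3 / 5 * c ^ 3)]

-- AM-GM `w ≤ (w ^ 2 / r + r) / 2` is applied to `w = √((1 - c) / (1 + c))` with `r = 3 / 10`, close
-- to the value of `w` at the minimum of `gapAtOne c (1 - c)`, which is attained near `c = 4 / 5`.
lemma gapAtOne_one_sub_pos (h0 : 0 < c) (h1 : c < 1) :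
    0 < gapAtOne c (1 - c) := by
  have hw_sq : ((1 - c) / semicircle c) ^ 2 = (1 - c) / (1 + c) := by
    rw [div_pow, semicircle_sq h0.le h1.le, div_eq_div_iff (by nlinarith) (by linarith)]
    ring
  have hw : (1 - c) / semicircle c ≤ ((1 - c) / (1 + c) / (3 / 10) + 3 / 10) / 2 := by
    nlinarith [sq_nonneg ((1 - c) / semicircle c - 3 / 10)]
  have hrat : 0 < 1 / 2 - c - c * (((1 - c) / (1 + c) / (3 / 10) + 3 / 10) / 2)
      + 2 * c / (c + 2) := by
    have hcommon : 1 / 2 - c - c * (((1 - c) / (1 + c) / (3 / 10) + 3 / 10) / 2) + 2 * c / (c + 2)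
        = ((1 / 2 - c) * (1 + c) * (c + 2)
          - c * (((1 - c) / (3 / 10) + 3 / 10 * (1 + c)) / 2) * (c + 2)
          + 2 * c * (1 + c)) / ((1 + c) * (c + 2)) := by
      field_simp
    rw [hcommon]
    refine div_pos ?_ (by positivity)
    nlinarith [mul_nonneg h0.le (sq_nonneg (c - 4 / 5)), sq_nonneg (c - 4 / 5),
      mul_pos h0 (sub_pos.2 h1)]
  have hvalue : gapAtOne c (1 - c)
      = 1 / 2 - c - c * ((1 - c) / semicircle c) + log (1 + c) := by
    unfold gapAtOne entropyExcess slopeExcess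
    ring
  rw [hvalue]
  linarith [mul_le_mul_of_nonneg_left hw h0.le, le_log_one_add_of_nonneg h0.le]

lemma gapAtOne_pos_of_ge (h0 : 3 / 4 ≤ c) (h1 : c < 1) (hm : 0 ≤ m) (hmc : m ≤ 1 - c) :
    0 < gapAtOne c m := by
  have hone := gapAtOne_one_sub_pos (by linarith) h1
  have hB : (1 - c) ^ 2 / 2 < entropyExcess c := by
    have h4 : (3 / 4) ^ 4 ≤ c ^ 4 := by gcongr
    have h6 : (3 / 4) ^ 6 ≤ c ^ 6 := by gcongr
    nlinarith [le_entropyExcess (abs_lt.2 ⟨by linarith, h1⟩ : |c| < 1)]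
  have hinterp : (1 - c) * gapAtOne c m
      = m * gapAtOne c (1 - c) + (1 - c - m) * (entropyExcess c - m * (1 - c) / 2) := by
    unfold gapAtOne
    ring
  have hright : 0 < entropyExcess c - m * (1 - c) / 2 := by nlinarith
  refine pos_of_mul_pos_right (a := 1 - c) ?_ (by linarith)
  rw [hinterp]
  rcases hm.eq_or_lt with rfl | hm
  · linarith [mul_pos (sub_pos.2 h1) hright]
  · exact add_pos_of_pos_of_nonneg (mul_pos hm hone) (mul_nonneg (by linarith) hright.le)

lemma gapAtOne_pos (h0 : 0 < c) (hm : 0 ≤ m) (hmc : m < 1 - c) :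
    0 < gapAtOne c m := by
  rcases le_total c (3 / 4) with hc | hc
  · exact gapAtOne_pos_of_le h0 hc hm
  · exact gapAtOne_pos_of_ge hc (by linarith) hm hmc.le

end EntropyExcess

section GapPos

variable {lam a b : ℝ}

lemma gap_one_eq (lam : ℝ) (hb0 : 0 < b) (hb1 : b ≤ 1) :
    gap lam 1 b = gapAtOne (semicircle b) (lam - semicircle b) := by
  have hsq := semicircle_sq hb0.le hb1
  have hprofile : profile lam 1 = 1 / 2 := by
    simp [profile, arcLog, semicircle]
  unfold gap bregman gapAtOne entropyExcess slopeExcess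
  rw [hprofile, profile, profileDeriv, arcLog, log_eq_semicircle hb0 hb1,
    semicircle_semicircle hb0.le hb1]
  field_simp
  linear_combination (-b) * hsq

lemma gap_one_pos (hlam : lam < 1) (hb0 : 0 < b) (hb1 : b < 1) (hb : semicircle b < lam) :
    0 < gap lam 1 b := by
  rw [gap_one_eq lam hb0 hb1.le]
  exact gapAtOne_pos (semicircle_pos hb0.le hb1) (sub_nonneg.2 hb.le) (by linarith)

lemma gap_pos_of_gt (hlam : lam < 1) (hb0 : 0 < b) (hba : b < a) (ha1 : a ≤ 1)
    (hb : semicircle b < lam) : 0 < gap lam a b := by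
  have hb1 : b < 1 := hba.trans_le ha1
  have hmin : min 0 (bregman (profile lam) (profileDeriv lam) 1 b)
      ≤ bregman (profile lam) (profileDeriv lam) a b :=
    min_zero_bregman_le_of_quasiconcaveOn
      ((continuousOn_profile lam).mono fun u hu => hb0.trans_le hu.1)
      (fun u hu => hasDerivAt_profile lam (hb0.trans hu.1) hu.2)
      ((convex_Icc b 1).quasiconcaveOn_restrict (quasiconcaveOn_profileDeriv hlam.le)
        fun u hu => ⟨hb0.trans_le hu.1, hu.2⟩)
      ⟨hba.le, ha1⟩
  have hone := gap_one_pos hlam hb0 hb1 hb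
  have hsq : 0 < (semicircle b - lam) ^ 2 := sq_pos_of_neg (sub_neg.2 hb)
  unfold gap at hone ⊢
  rcases min_le_iff.1 hmin with h | h <;> linarith

lemma gap_pos (hlam : lam < 1) (ha0 : 0 < a) (ha1 : a ≤ 1) (hb0 : 0 < b) (hb1 : b ≤ 1)
    (hab : ¬(a = b ∧ semicircle b = lam)) : 0 < gap lam a b := by
  rcases eq_or_ne a b with rfl | hne
  · have : semicircle a - lam ≠ 0 := sub_ne_zero.2 fun h => hab ⟨rfl, h⟩
    rw [gap_self]
    positivity
  rcases le_or_gt lam (semicircle b) with hle | hgt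
  · exact add_pos_of_pos_of_nonneg (bregman_profile_pos ha0 ha1 hb0 hb1 hne hle) (by positivity)
  rcases hne.lt_or_gt with h | h
  · exact gap_pos_of_lt hlam ha0 h hb1 hgt
  · exact gap_pos_of_gt hlam hb0 h ha1 hgt

end GapPos

section Euclidean

variable {d : ℕ} {lam : ℝ}

lemma coord_le_norm (x : Euc d) (j : Fin (d + 2)) : x j ≤ ‖x‖ :=
  (le_abs_self _).trans (PiLp.norm_apply_le x j)

lemma norm_e (j : Fin (d + 2)) : ‖e d j‖ = 1 := by
  simp [e]

lemma norm_add_smul_e_add_smul_e_sq (v : Euc d) (α β : ℝ) :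
    ‖v + α • e d 0 + β • e d 1‖ ^ 2 = ‖v‖ ^ 2 + 2 * α * v 0 + 2 * β * v 1 + α ^ 2 + β ^ 2 := by
  have horth : inner ℝ (e d 0) (e d 1) = 0 := by
    simp [e, EuclideanSpace.inner_single_left]
  have hcoord : ∀ j, inner ℝ v (e d j) = v j := fun j => by
    simp [e, EuclideanSpace.inner_single_right]
  rw [norm_add_sq_real, norm_add_sq_real, inner_add_left, inner_smul_right, inner_smul_right,
    inner_smul_left, inner_smul_right, hcoord, hcoord, horth, norm_smul, norm_smul, norm_e, norm_e,
    mul_one, mul_one, norm_eq_abs, norm_eq_abs, sq_abs, sq_abs]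
  ring

lemma sq_add_sq_le_norm_sq (x : Euc d) : x 0 ^ 2 + x 1 ^ 2 ≤ ‖x‖ ^ 2 := by
  have hproj := norm_add_smul_e_add_smul_e_sq x (-x 0) (-x 1)
  linarith [sq_nonneg ‖x + (-x 0) • e d 0 + (-x 1) • e d 1‖]

lemma xStar_zero (d : ℕ) (lam : ℝ) : xStar d lam 0 = semicircle lam := by
  simp [xStar, e, semicircle]

lemma xStar_one (d : ℕ) (lam : ℝ) : xStar d lam 1 = lam := by
  simp [xStar, e]

lemma norm_xStar (h0 : 0 ≤ lam) (h1 : lam ≤ 1) : ‖xStar d lam‖ = 1 := by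
  have hsq := norm_add_smul_e_add_smul_e_sq (0 : Euc d) (semicircle lam) lam
  rw [zero_add, semicircle_sq h0 h1] at hsq
  refine (sq_eq_sq₀ (norm_nonneg _) zero_le_one).1 (hsq.trans ?_)
  simp

lemma norm_sub_xStar_sq (h0 : 0 ≤ lam) (h1 : lam ≤ 1) (x : Euc d) :
    ‖x - xStar d lam‖ ^ 2 = ‖x‖ ^ 2 - 2 * (semicircle lam * x 0 + lam * x 1) + 1 := by
  have hx : x - xStar d lam = x + (-semicircle lam) • e d 0 + (-lam) • e d 1 := by
    unfold xStar semicircle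
    module
  rw [hx, norm_add_smul_e_add_smul_e_sq]
  linear_combination semicircle_sq h0 h1

lemma xStar_mem_Delta (h0 : 0 ≤ lam) (h1 : lam < 1) : xStar d lam ∈ Delta d := by
  rw [Delta, mem_ofPred_eq, xStar_zero]
  exact ⟨semicircle_pos h0 h1, semicircle_le_one lam⟩

lemma exists_mem_Delta_le_norm_sub_xStar (h0 : 0 ≤ lam) (h1 : lam < 1) (t : ℝ) :
    ∃ x ∈ Delta d, t ≤ ‖x - xStar d lam‖ := by
  refine ⟨xStar d lam + t • e d 1, ?_, ?_⟩
  · have hcoord : (xStar d lam + t • e d 1) 0 = xStar d lam 0 := by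
      simp [e]
    rw [Delta, mem_ofPred_eq, hcoord]
    exact xStar_mem_Delta h0 h1
  · rw [add_sub_cancel_left, norm_smul, norm_e, mul_one]
    exact le_norm_self t

end Euclidean

section DouglasRachford

variable {d : ℕ} {lam : ℝ} {x : Euc d}

lemma DR_eq (lam : ℝ) (x : Euc d) :
    DR d lam x = (1 - 1 / ‖x‖) • x + (x 0 / ‖x‖ - (1 - 1 / ‖x‖) * x 0) • e d 0 + lam • e d 1 := by
  ext j
  have hsum : ∑ i ∈ Finset.univ.filter (fun j : Fin (d + 2) => 2 ≤ (j : ℕ)),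
      (1 - 1 / ‖x‖) * x i * e d i j = if 2 ≤ (j : ℕ) then (1 - 1 / ‖x‖) * x j else 0 := by
    simp [e, PiLp.single_apply]
  simp only [DR, PiLp.add_apply, PiLp.smul_apply, smul_eq_mul, WithLp.ofLp_sum, Finset.sum_apply,
    WithLp.ofLp_smul, Pi.smul_apply, hsum]
  refine Fin.cases ?_ (Fin.cases ?_ fun i => ?_) j <;> simp [e, Fin.ext_iff]

lemma DR_zero (lam : ℝ) (x : Euc d) : DR d lam x 0 = x 0 / ‖x‖ := by
  simp [DR_eq, e]

lemma norm_DR_sub_sq (lam : ℝ) (hx : x ≠ 0) :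
    ‖DR d lam x - lam • e d 1‖ ^ 2 = (‖x‖ - 1) ^ 2 + x 0 ^ 2 * (2 / ‖x‖ - 1) := by
  have hr := norm_pos_iff.2 hx
  have hDR : DR d lam x - lam • e d 1 =
      (1 - 1 / ‖x‖) • x + (x 0 / ‖x‖ - (1 - 1 / ‖x‖) * x 0) • e d 0 + (0 : ℝ) • e d 1 := by
    rw [DR_eq]
    module
  rw [hDR, norm_add_smul_e_add_smul_e_sq, norm_smul, mul_pow, norm_eq_abs, sq_abs]
  simp only [PiLp.smul_apply, smul_eq_mul]
  field_simp
  ring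

/-- The continuous extension of `W` from `Δ` to the points `x ≠ 0` of its boundary. -/
def extW (lam : ℝ) (x : Euc d) : ℝ :=
  ‖x‖ - lam * x 1 + (lam ^ 2 - 1) / 2 - x 0 ^ 2 / ‖x‖ + x 0 ^ 2 / 2
    + lam * (arcLog (x 0) - arcLog (x 0 / ‖x‖)) + (lam - 1) * log ‖x‖

/-- The closed slab `0 ≤ x₁ ≤ 1` without the origin, the natural domain of `extW`. -/
def puncturedSlab (d : ℕ) : Set (Euc d) :=
  {x | 0 ≤ x 0 ∧ x 0 ≤ 1 ∧ x ≠ 0}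

lemma Delta_subset_puncturedSlab : Delta d ⊆ puncturedSlab d := fun x hx =>
  ⟨hx.1.le, hx.2, fun h => hx.1.ne' (by simp [h])⟩

lemma W_eq_extW (lam : ℝ) (hx : x ∈ Delta d) : W d lam x = extW lam x := by
  have hx_ne := (Delta_subset_puncturedSlab hx).2.2
  have hr := norm_pos_iff.2 hx_ne
  have hnorm : ‖x - lam • e d 1‖ ^ 2 = ‖x‖ ^ 2 - 2 * lam * x 1 + lam ^ 2 := by
    have hcoord : x - lam • e d 1 = x + (0 : ℝ) • e d 0 + (-lam) • e d 1 := by module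
    rw [hcoord, norm_add_smul_e_add_smul_e_sq]
    ring
  unfold W F
  rw [hnorm, norm_DR_sub_sq lam hx_ne, DR_zero, log_div hx.1.ne' hr.ne']
  unfold extW arcLog semicircle
  field_simp
  ring

lemma g_eq_infAbove (d : ℕ) (lam : ℝ) :
    g d lam = infAbove (extW lam) (fun x => ‖x - xStar d lam‖) (Delta d) := by
  funext t
  refine congrArg sInf (Set.ext fun w => ⟨?_, ?_⟩)
  · rintro ⟨x, hx, ht, rfl⟩
    exact ⟨x, ⟨hx, ht⟩, (W_eq_extW lam hx).symm⟩
  · rintro ⟨x, ⟨hx, ht⟩, rfl⟩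
    exact ⟨x, hx, ht, (W_eq_extW lam hx).symm⟩

lemma extW_eq_gap (lam : ℝ) (hx : x ∈ Delta d) :
    extW lam x = gap lam (x 0) (x 0 / ‖x‖) + lam * (‖x‖ * semicircle (x 0 / ‖x‖) - x 1) := by
  have hr := norm_pos_iff.2 (Delta_subset_puncturedSlab hx).2.2
  have hx0 := hx.1
  have hb0 : 0 < x 0 / ‖x‖ := div_pos hx.1 hr
  have hsq := semicircle_sq hb0.le (div_le_one_of_le₀ (coord_le_norm x 0) hr.le)
  have hslope : profileDeriv lam (x 0 / ‖x‖) * (x 0 - x 0 / ‖x‖)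
      = semicircle (x 0 / ‖x‖) * (lam - semicircle (x 0 / ‖x‖)) * (‖x‖ - 1) := by
    unfold profileDeriv
    field_simp
  have hdiv : x 0 ^ 2 / ‖x‖ = ‖x‖ * (x 0 / ‖x‖) ^ 2 := by
    field_simp
  unfold extW gap bregman
  rw [hslope, profile, profile, log_div hx.1.ne' hr.ne', hdiv]
  linear_combination (1 / 2 - ‖x‖) * hsq

lemma coord_one_le_norm_mul_semicircle (hx : x ≠ 0) (hx0 : 0 ≤ x 0) :
    x 1 ≤ ‖x‖ * semicircle (x 0 / ‖x‖) := by
  have hr := norm_pos_iff.2 hx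
  have hsq : (‖x‖ * semicircle (x 0 / ‖x‖)) ^ 2 = ‖x‖ ^ 2 - x 0 ^ 2 := by
    rw [mul_pow, semicircle_sq (div_nonneg hx0 hr.le)
      (div_le_one_of_le₀ (coord_le_norm x 0) hr.le)]
    field_simp
  exact le_of_abs_le (abs_le_of_sq_le_sq (by linarith [sq_add_sq_le_norm_sq x])
    (mul_nonneg hr.le (semicircle_nonneg _)))

lemma extW_eq_half_norm_sub_xStar_sq (hx0 : 0 ≤ x 0) (hx1 : x 0 ≤ 1) (hnorm : ‖x‖ = 1)
    (hlam : semicircle (x 0) = lam) : extW lam x = ‖x - xStar d lam‖ ^ 2 / 2 := by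
  subst hlam
  rw [norm_sub_xStar_sq (semicircle_nonneg _) (semicircle_le_one _), semicircle_semicircle hx0 hx1,
    extW, hnorm, div_one, div_one, log_one]
  linear_combination (1 / 2 : ℝ) * semicircle_sq hx0 hx1

lemma extW_xStar (h0 : 0 ≤ lam) (h1 : lam ≤ 1) : extW lam (xStar d lam) = 0 := by
  rw [extW_eq_half_norm_sub_xStar_sq (lam := lam) _ _ (norm_xStar h0 h1)] <;>
    simp [xStar_zero, semicircle_semicircle h0 h1, semicircle_nonneg, semicircle_le_one]

lemma extW_pos_of_coord_zero (h0 : 0 ≤ lam) (h1 : lam < 1) (hx : x ≠ 0) (hx0 : x 0 = 0) :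
    0 < extW lam x := by
  have hone := mul_nonneg h0 (sub_nonneg.2 (coord_le_norm x 1))
  have hlog := mul_nonneg (sub_nonneg.2 h1.le)
    (sub_nonneg.2 (log_le_sub_one_of_pos (norm_pos_iff.2 hx)))
  have hsq : 0 < (1 - lam) ^ 2 := pow_pos (sub_pos.2 h1) 2
  simp only [extW, hx0, ne_eq, two_ne_zero, not_false_eq_true, zero_pow, zero_div, sub_self,
    mul_zero]
  linarith [hone, hlog, hsq]

lemma extW_pos_of_mem_Delta (h0 : 0 ≤ lam) (h1 : lam < 1) (hx : x ∈ Delta d)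
    (hne : x ≠ xStar d lam) : 0 < extW lam x := by
  have hx_ne := (Delta_subset_puncturedSlab hx).2.2
  have hr := norm_pos_iff.2 hx_ne
  by_cases hfix : x 0 = x 0 / ‖x‖ ∧ semicircle (x 0 / ‖x‖) = lam
  · obtain ⟨hx0, hlam⟩ := hfix
    have hnorm : ‖x‖ = 1 := by
      rw [eq_div_iff hr.ne'] at hx0
      exact mul_eq_left₀ hx.1.ne' |>.1 hx0
    rw [← hx0] at hlam
    rw [extW_eq_half_norm_sub_xStar_sq hx.1.le hx.2 hnorm hlam]
    have := norm_pos_iff.2 (sub_ne_zero.2 hne)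
    positivity
  · rw [extW_eq_gap lam hx]
    exact add_pos_of_pos_of_nonneg
      (gap_pos h1 hx.1 hx.2 (div_pos hx.1 hr)
        (div_le_one_of_le₀ (coord_le_norm x 0) hr.le) hfix)
      (mul_nonneg h0 (sub_nonneg.2 (coord_one_le_norm_mul_semicircle hx_ne hx.1.le)))

lemma extW_pos (h0 : 0 ≤ lam) (h1 : lam < 1) (hx : x ∈ puncturedSlab d)
    (hne : x ≠ xStar d lam) : 0 < extW lam x := by
  rcases hx.1.eq_or_lt with hx0 | hx0
  · exact extW_pos_of_coord_zero h0 h1 hx.2.2 hx0.symm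
  · exact extW_pos_of_mem_Delta h0 h1 ⟨hx0, hx.2.1⟩ hne

lemma extW_nonneg (h0 : 0 ≤ lam) (h1 : lam < 1) (hx : x ∈ puncturedSlab d) : 0 ≤ extW lam x := by
  rcases eq_or_ne x (xStar d lam) with rfl | hne
  · exact (extW_xStar h0 h1.le).ge
  · exact (extW_pos h0 h1 hx hne).le

end DouglasRachford

section Sublevel

variable {d : ℕ} {lam : ℝ} {x : Euc d}

lemma continuousOn_extW (d : ℕ) (lam : ℝ) :
    ContinuousOn (extW lam) (puncturedSlab d) := by
  have hne : ∀ x ∈ puncturedSlab d, ‖x‖ ≠ 0 := fun x hx => norm_ne_zero_iff.2 hx.2.2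
  have hlog : ContinuousOn (fun x : Euc d => log ‖x‖) (puncturedSlab d) :=
    continuous_norm.continuousOn.log hne
  have hsq : ContinuousOn (fun x : Euc d => x 0 ^ 2 / ‖x‖) (puncturedSlab d) :=
    ContinuousOn.div (by fun_prop) (by fun_prop) hne
  have harc : ContinuousOn (fun x : Euc d => arcLog (x 0 / ‖x‖)) (puncturedSlab d) :=
    continuous_arcLog.comp_continuousOn (ContinuousOn.div (by fun_prop) (by fun_prop) hne)
  unfold extW
  fun_prop

lemma sub_log_le_extW (h0 : 0 ≤ lam) (h1 : lam < 1) (hx : x ∈ puncturedSlab d) :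
    (1 - lam) * (‖x‖ - log ‖x‖) - 3 ≤ extW lam x := by
  have hr := norm_pos_iff.2 hx.2.2
  have hone := mul_nonneg h0 (sub_nonneg.2 (coord_le_norm x 1))
  have hdiv : x 0 ^ 2 / ‖x‖ ≤ 1 := by
    rw [div_le_one hr]
    nlinarith [hx.1, hx.2.1, coord_le_norm x 0]
  have harc : -1 ≤ lam * (arcLog (x 0) - arcLog (x 0 / ‖x‖)) := by
    nlinarith [arcLog_nonneg (x 0), arcLog_le_one (x 0 / ‖x‖)]
  unfold extW
  linarith [sq_nonneg (x 0), sq_nonneg lam]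

lemma exp_neg_le_and_le_two_mul_of_sub_log_le {r R : ℝ} (hr : 0 < r) (h : r - log r ≤ R) :
    exp (-R) ≤ r ∧ r ≤ 2 * R := by
  constructor
  · rw [← le_log_iff_exp_le hr]
    linarith
  · have hhalf := log_le_sub_one_of_pos (half_pos hr)
    rw [log_div hr.ne' two_ne_zero] at hhalf
    linarith [log_two_lt_d9]

lemma isCompact_slab_inter_annulus (d : ℕ) (r R : ℝ) :
    IsCompact {x : Euc d | x 0 ∈ Icc 0 1 ∧ ‖x‖ ∈ Icc r R} := by
  refine (isCompact_closedBall (0 : Euc d) R).of_isClosed_subset ?_ fun x hx => ?_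
  · exact (isClosed_Icc.preimage (by fun_prop : Continuous fun x : Euc d => x 0)).inter
      (isClosed_Icc.preimage continuous_norm)
  · exact mem_closedBall_zero_iff.2 hx.2.2

lemma isCompact_sublevel_extW (h0 : 0 ≤ lam) (h1 : lam < 1) (M : ℝ) :
    IsCompact {x ∈ puncturedSlab d | extW lam x ≤ M} := by
  set R := (M + 3) / (1 - lam)
  set K : Set (Euc d) := {x | x 0 ∈ Icc 0 1 ∧ ‖x‖ ∈ Icc (exp (-R)) (2 * R)}
  have hK : IsCompact K := isCompact_slab_inter_annulus d _ _
  have hK_slab : K ⊆ puncturedSlab d := fun x hx =>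
    ⟨hx.1.1, hx.1.2, norm_pos_iff.1 ((exp_pos _).trans_le hx.2.1)⟩
  have hsublevel : {x ∈ puncturedSlab d | extW lam x ≤ M} = K ∩ extW lam ⁻¹' Iic M := by
    refine Subset.antisymm (fun x ⟨hx, hxM⟩ => ⟨⟨⟨hx.1, hx.2.1⟩, ?_⟩, hxM⟩)
      fun x hx => ⟨hK_slab hx.1, hx.2⟩
    refine exp_neg_le_and_le_two_mul_of_sub_log_le (norm_pos_iff.2 hx.2.2) ?_
    rw [le_div_iff₀ (sub_pos.2 h1)]
    linarith [sub_log_le_extW h0 h1 hx]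
  rw [hsublevel]
  have hclosed := ((continuousOn_extW d lam).mono hK_slab).preimage_isClosed_of_isClosed
    hK.isClosed (isClosed_Iic (a := M))
  exact hK.of_isClosed_subset hclosed inter_subset_left

end Sublevel

section PushAway

variable {d : ℕ} {lam δ : ℝ} {x : Euc d}

/-- A path issuing from `x` at `δ = 0` that enters `Δ` and moves away from `xStar d lam`. The motion
of order `δ` along `e₂`, away from the hyperplane `x₂ = lam`, outweighs the motion of order `δ²`
along `e₁` that is needed to leave the hyperplane `x₁ = 0`. -/
def pushAway (lam : ℝ) (x : Euc d) (δ : ℝ) : Euc d :=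
  x + (δ ^ 2 / 4 * (1 - x 0)) • e d 0 + (if lam ≤ x 1 then δ else -δ) • e d 1

lemma pushAway_zero (lam : ℝ) (x : Euc d) : pushAway lam x 0 = x := by
  simp [pushAway]

lemma continuous_pushAway (lam : ℝ) (x : Euc d) : Continuous (pushAway lam x) := by
  unfold pushAway
  split_ifs <;> fun_prop

lemma pushAway_mem_Delta (lam : ℝ) (hx0 : 0 ≤ x 0) (hx1 : x 0 ≤ 1) (hδ : δ ∈ Ioc 0 1) :
    pushAway lam x δ ∈ Delta d := by
  have hcoord : pushAway lam x δ 0 = x 0 + δ ^ 2 / 4 * (1 - x 0) := by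
    unfold pushAway
    split_ifs <;> simp [e]
  have hδ_pos : 0 < δ ^ 2 := pow_pos hδ.1 2
  have hδ_le : δ ^ 2 ≤ 1 := pow_le_one₀ hδ.1.le hδ.2
  rw [Delta, mem_ofPred_eq, hcoord]
  constructor <;> nlinarith

lemma norm_sub_xStar_lt_pushAway (hx0 : 0 ≤ x 0) (hx1 : x 0 ≤ 1) (hδ : 0 < δ) :
    ‖x - xStar d lam‖ < ‖pushAway lam x δ - xStar d lam‖ := by
  refine lt_of_pow_lt_pow_left₀ 2 (norm_nonneg _) ?_
  set α := δ ^ 2 / 4 * (1 - x 0)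
  set β := if lam ≤ x 1 then δ else -δ with hβ
  have hα0 : 0 ≤ α := mul_nonneg (by positivity) (sub_nonneg.2 hx1)
  have hα1 : α ≤ δ ^ 2 / 4 := mul_le_of_le_one_right (by positivity) (by linarith)
  have hβ_sq : β ^ 2 = δ ^ 2 := by
    rw [hβ]
    split_ifs <;> ring
  have hβ_away : 0 ≤ β * (x 1 - lam) := by
    rw [hβ]
    split_ifs with h <;> nlinarith
  have hα_away : -α ≤ α * (x 0 - semicircle lam) := by
    nlinarith [semicircle_le_one lam]
  have hpush : pushAway lam x δ - xStar d lam = (x - xStar d lam) + α • e d 0 + β • e d 1 := by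
    unfold pushAway
    module
  rw [hpush, norm_add_smul_e_add_smul_e_sq, PiLp.sub_apply, PiLp.sub_apply, xStar_zero, xStar_one]
  nlinarith [sq_nonneg α, pow_pos hδ 2]

lemma exists_mem_Delta_extW_lt (hx : x ∈ puncturedSlab d) {ε : ℝ} (hε : 0 < ε) :
    ∃ y ∈ Delta d, ‖x - xStar d lam‖ < ‖y - xStar d lam‖ ∧ extW lam y < extW lam x + ε := by
  have hmem : ∀ᶠ δ in 𝓝[>] 0, δ ∈ Ioc (0 : ℝ) 1 := Ioc_mem_nhdsGT one_pos
  have hpush : Tendsto (pushAway lam x) (𝓝[>] 0) (𝓝[puncturedSlab d] x) := by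
    refine tendsto_nhdsWithin_iff.2 ⟨?_, hmem.mono fun δ hδ =>
      Delta_subset_puncturedSlab (pushAway_mem_Delta lam hx.1 hx.2.1 hδ)⟩
    simpa only [pushAway_zero] using
      ((continuous_pushAway lam x).tendsto 0).mono_left nhdsWithin_le_nhds
  have hlt : ∀ᶠ δ in 𝓝[>] 0, extW lam (pushAway lam x δ) < extW lam x + ε :=
    ((continuousOn_extW d lam x hx).tendsto.comp hpush).eventually_lt_const (by linarith)
  obtain ⟨δ, hδ, hδ_lt⟩ := (hmem.and hlt).exists
  exact ⟨pushAway lam x δ, pushAway_mem_Delta lam hx.1 hx.2.1 hδ,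
    norm_sub_xStar_lt_pushAway hx.1 hx.2.1 hδ.1, hδ_lt⟩

end PushAway

/-- For `λ ∈ [0,1)`, the function `g : [0,∞) → ℝ` is non-decreasing,
non-negative, continuous, and positive definite: `g(t) = 0` iff `t = 0`. -/
theorem stmt7 (d : ℕ) (lam : ℝ) (h0 : 0 ≤ lam) (h1 : lam < 1) :
    (∀ s t : ℝ, 0 ≤ s → s ≤ t → g d lam s ≤ g d lam t) ∧
    (∀ t : ℝ, 0 ≤ t → 0 ≤ g d lam t) ∧
    ContinuousOn (g d lam) (Ici 0) ∧
    (∀ t : ℝ, 0 ≤ t → (g d lam t = 0 ↔ t = 0)) := by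
  have hdist : Continuous fun x : Euc d => ‖x - xStar d lam‖ := by fun_prop
  have hfar := exists_mem_Delta_le_norm_sub_xStar (d := d) h0 h1
  have hnonneg : ∀ x ∈ Delta d, 0 ≤ extW lam x := fun x hx =>
    extW_nonneg h0 h1 (Delta_subset_puncturedSlab hx)
  have hbdd : BddBelow (extW lam '' Delta d) := ⟨0, forall_mem_image.2 hnonneg⟩
  have hcompact := isCompact_sublevel_extW (d := d) h0 h1
  have hg_nonneg : ∀ t, 0 ≤ infAbove (extW lam) (fun x => ‖x - xStar d lam‖) (Delta d) t :=
    fun t => le_infAbove (hfar t) fun x hx _ => hnonneg x hx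
  rw [g_eq_infAbove]
  refine ⟨fun s t _ hst => infAbove_mono hbdd hfar hst, fun t _ => hg_nonneg t,
    (continuous_infAbove hdist hbdd hfar Delta_subset_puncturedSlab hcompact
      fun x hx ε hε => exists_mem_Delta_extW_lt hx hε).continuousOn,
    fun t ht => ⟨fun hg => ?_, ?_⟩⟩
  · by_contra hne
    refine (infAbove_pos hdist (hfar t) Delta_subset_puncturedSlab (continuousOn_extW d lam)
      hcompact fun x hx htx => extW_pos h0 h1 hx ?_).ne' hg
    rintro rfl
    exact hne (le_antisymm (by simpa using htx) ht)
  · rintro rfl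
    refine le_antisymm ?_ (hg_nonneg 0)
    exact (infAbove_le hbdd (xStar_mem_Delta h0 h1) (norm_nonneg (_ - xStar d lam))).trans_eq
      (extW_xStar h0 h1.le)
end
end

section
/- Let d ≥ 2 and λ ∈ [0,1). Define V : H₊ → ℝ by V(x) = F(T x) − F(x*). Then there exists a continuous function α : [0,∞) → [0,∞) with α(t) = 0 if and only if t = 0 (i.e., continuous and positive definite) such that V(T x) ≤ V(x) − α(V(x)) for every x ∈ H₊. -/
noncomputable section

open Metric Set Filter

/-- `H₊ = {x : x₁ > 0}`. -/
def Hplus (d : ℕ) : Set (Euc d) := {x | 0 < x 0}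

/-- `V(x) = F(T x) − F(x*)` on `H₊`. -/
def V (d : ℕ) (lam : ℝ) (x : Euc d) : ℝ := F d lam (DR d lam x) - F d lam (xStar d lam)

/-!
For `x ∈ Δ` put `c = √(1 - x₁²)` and `σ = √(1 - (Tx)₁²)`. Then
`F x - F (Tx) = (σ - λ)² / 2 + D(σ, c) + λ (‖x‖ σ - x₂)`, where `D(σ, ·)` is the Bregman divergence,
based at `σ`, of the part of `F` that depends on `x₁` alone. The last term is nonnegative by
Cauchy–Schwarz, so everything rests on `-(σ - λ)² / 2 < D(σ, c)` unless `σ = c = λ`. That part of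
`F` need not be convex, and `D` may be negative when `σ < λ`: for `c ≥ σ` its derivative in `c` is
at least `-(c - σ) / 2`, and for `c ≤ σ` it is at least the smaller of its values at `c = σ` and
`c = 0`, the latter being an explicit function of `σ` and `λ`.

Hence `F ∘ T ≤ F`, with equality only on the level `F = F(x*)`. As `F` has compact sublevel sets in
`Δ`, the distance from `(t, 0)` to the set of pairs `(F x - F(x*), F x - F (Tx))`, `x ∈ Δ`, vanishes
only at `t = 0`, and this distance is the required `α`.
-/

theorem exists_continuous_posDef_le_of_isCompact_sublevel {X : Type*} [TopologicalSpace X]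
    {S : Set X} {f g : X → ℝ} (hf : ContinuousOn f S) (hg : ContinuousOn g S)
    (hcompact : ∀ t, IsCompact {x ∈ S | f x ≤ t}) (hg_nonneg : ∀ x ∈ S, 0 ≤ g x)
    (hg_zero : ∀ x ∈ S, g x = 0 → f x = 0) {x₀ : X} (hx₀ : x₀ ∈ S) (hgx₀ : g x₀ = 0) :
    ∃ a : ℝ → ℝ, Continuous a ∧ (∀ t, 0 ≤ a t) ∧ (∀ t, a t = 0 ↔ t = 0) ∧
      ∀ x ∈ S, a (f x) ≤ g x := by
  set graph : Set (ℝ × ℝ) := (fun x => (f x, g x)) '' S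
  have mem_graph {x : X} (hx : x ∈ S) : (f x, g x) ∈ graph := mem_image_of_mem _ hx
  have zero_mem : ((0, 0) : ℝ × ℝ) ∈ graph := by
    simpa only [hg_zero x₀ hx₀ hgx₀, hgx₀] using mem_graph hx₀
  refine ⟨fun t => infDist (t, 0) graph, (continuous_infDist_pt graph).comp (by fun_prop),
    fun t => infDist_nonneg, fun t => ⟨fun ht => ?_, ?_⟩, fun x hx => ?_⟩
  · have ht_closure : (t, 0) ∈ closure graph :=
      (mem_closure_iff_infDist_zero ⟨_, zero_mem⟩).2 ht
    set K : Set X := {x ∈ S | f x ≤ t + 1}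
    have hK_closed : IsClosed ((fun x => (f x, g x)) '' K) :=
      ((hcompact (t + 1)).image_of_continuousOn
        ((hf.prodMk hg).mono (sep_subset _ _))).isClosed
    have hopen : IsOpen {p : ℝ × ℝ | p.1 < t + 1} := isOpen_lt continuous_fst continuous_const
    have hsubset : {p : ℝ × ℝ | p.1 < t + 1} ∩ graph ⊆ (fun x => (f x, g x)) '' K := by
      rintro _ ⟨hlt, x, hx, rfl⟩
      exact mem_image_of_mem _ ⟨hx, le_of_lt hlt⟩
    obtain ⟨x, hx, hxt⟩ := closure_minimal hsubset hK_closed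
      (hopen.inter_closure ⟨lt_add_one t, ht_closure⟩)
    obtain ⟨rfl, hgx⟩ := Prod.mk.inj hxt
    exact hg_zero x hx.1 hgx
  · rintro rfl
    exact infDist_zero_of_mem zero_mem
  · refine (infDist_le_dist_of_mem (mem_graph hx)).trans_eq ?_
    simp [Prod.dist_eq, hg_nonneg x hx]

theorem monotoneOn_of_hasDerivAt_nonneg {D : Set ℝ} (hD : Convex ℝ D) {f f' : ℝ → ℝ}
    (hf : ∀ x ∈ D, HasDerivAt f (f' x) x) (hf' : ∀ x ∈ D, 0 ≤ f' x) : MonotoneOn f D :=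
  monotoneOn_of_hasDerivWithinAt_nonneg hD (HasDerivAt.continuousOn hf)
    (fun x hx => (hf x (interior_subset hx)).hasDerivWithinAt)
    fun x hx => hf' x (interior_subset hx)

theorem antitoneOn_of_hasDerivAt_nonpos {D : Set ℝ} (hD : Convex ℝ D) {f f' : ℝ → ℝ}
    (hf : ∀ x ∈ D, HasDerivAt f (f' x) x) (hf' : ∀ x ∈ D, f' x ≤ 0) : AntitoneOn f D :=
  antitoneOn_of_hasDerivWithinAt_nonpos hD (HasDerivAt.continuousOn hf)
    (fun x hx => (hf x (interior_subset hx)).hasDerivWithinAt)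
    fun x hx => hf' x (interior_subset hx)

theorem min_le_of_hasDerivAt_of_neg_imp_nonpos {f f' : ℝ → ℝ} {a b : ℝ}
    (hf : ∀ x ∈ Icc a b, HasDerivAt f (f' x) x)
    (hf' : ∀ x ∈ Icc a b, ∀ y ∈ Icc x b, f' x < 0 → f' y ≤ 0) {c : ℝ} (hc : c ∈ Icc a b) :
    min (f a) (f b) ≤ f c := by
  by_cases hneg : ∃ x ∈ Icc a c, f' x < 0
  · obtain ⟨x, hx, hfx⟩ := hneg
    have hanti : AntitoneOn f (Icc c b) :=
      antitoneOn_of_hasDerivAt_nonpos (convex_Icc c b)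
        (fun y hy => hf y ⟨hc.1.trans hy.1, hy.2⟩)
        fun y hy => hf' x ⟨hx.1, hx.2.trans hc.2⟩ y ⟨hx.2.trans hy.1, hy.2⟩ hfx
    exact min_le_of_right_le (hanti (left_mem_Icc.2 hc.2) (right_mem_Icc.2 hc.2) hc.2)
  · push Not at hneg
    have hmono : MonotoneOn f (Icc a c) :=
      monotoneOn_of_hasDerivAt_nonneg (convex_Icc a c) (fun y hy => hf y ⟨hy.1, hy.2.trans hc.2⟩)
        hneg
    exact min_le_of_left_le (hmono (left_mem_Icc.2 hc.1) (right_mem_Icc.2 hc.1) hc.1)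

theorem one_sub_sq_pos_of_mem_Ioo {c : ℝ} (hc : c ∈ Ioo (-1 : ℝ) 1) : 0 < 1 - c ^ 2 := by
  nlinarith [hc.1, hc.2]

theorem hasDerivAt_one_sub_sq (c : ℝ) : HasDerivAt (fun c : ℝ => 1 - c ^ 2) (-(2 * c)) c := by
  simpa using ((hasDerivAt_id c).pow 2).const_sub 1

theorem artanh_eq_log_sub_log {x : ℝ} (hx : x ∈ Ioo (-1 : ℝ) 1) :
    Real.artanh x = (Real.log (1 + x) - Real.log (1 - x)) / 2 := by
  rw [Real.artanh_eq_half_log (Ioo_subset_Icc_self hx),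
    Real.log_div (by linarith [hx.1]) (by linarith [hx.2])]
  ring

theorem hasDerivAt_artanh {x : ℝ} (hx : x ∈ Ioo (-1 : ℝ) 1) :
    HasDerivAt Real.artanh (1 - x ^ 2)⁻¹ x := by
  have hadd : 1 + x ≠ 0 := by linarith [hx.1]
  have hsub : 1 - x ≠ 0 := by linarith [hx.2]
  have hlog : HasDerivAt (fun x => (Real.log (1 + x) - Real.log (1 - x)) / 2)
      ((1 / (1 + x) - -1 / (1 - x)) / 2) x :=
    ((((hasDerivAt_id x).const_add 1).log hadd).sub
      (((hasDerivAt_id x).const_sub 1).log hsub)).div_const 2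
  have heq : Real.artanh =ᶠ[nhds x] fun x => (Real.log (1 + x) - Real.log (1 - x)) / 2 :=
    eventually_of_mem (isOpen_Ioo.mem_nhds hx) fun y hy => artanh_eq_log_sub_log hy
  refine (hlog.congr_of_eventuallyEq heq).congr_deriv ?_
  rw [show 1 - x ^ 2 = (1 + x) * (1 - x) by ring]
  field_simp
  ring

theorem add_cube_div_three_le_artanh {x : ℝ} (hx₀ : 0 ≤ x) (hx₁ : x < 1) :
    x + x ^ 3 / 3 ≤ Real.artanh x := by
  rw [Real.artanh_eq_half_log ⟨by linarith, hx₁.le⟩]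
  refine le_trans (le_of_eq ?_) (Real.sum_range_le_log_div hx₀ hx₁ 2)
  norm_num [Finset.sum_range_succ]

namespace DouglasRachford

/-- The tangent of the angle in `(-π/2, π/2)` whose sine is `c`. -/
def tanOfSin (c : ℝ) : ℝ := c / √(1 - c ^ 2)

theorem tanOfSin_nonneg {c : ℝ} (hc : 0 ≤ c) : 0 ≤ tanOfSin c :=
  div_nonneg hc (Real.sqrt_nonneg _)

theorem tanOfSin_pos {c : ℝ} (hc₀ : 0 < c) (hc₁ : c < 1) : 0 < tanOfSin c :=
  div_pos hc₀ (Real.sqrt_pos.2 (one_sub_sq_pos_of_mem_Ioo ⟨by linarith, hc₁⟩))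

theorem tanOfSin_sq {c : ℝ} (hc : c ∈ Ioo (-1 : ℝ) 1) :
    tanOfSin c ^ 2 = c ^ 2 / (1 - c ^ 2) := by
  rw [tanOfSin, div_pow, Real.sq_sqrt (one_sub_sq_pos_of_mem_Ioo hc).le]

theorem hasDerivAt_sqrt_one_sub_sq {c : ℝ} (hc : c ∈ Ioo (-1 : ℝ) 1) :
    HasDerivAt (fun c : ℝ => √(1 - c ^ 2)) (-tanOfSin c) c := by
  refine ((hasDerivAt_one_sub_sq c).sqrt (one_sub_sq_pos_of_mem_Ioo hc).ne').congr_deriv ?_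
  rw [tanOfSin]
  ring

theorem hasDerivAt_tanOfSin {c : ℝ} (hc : c ∈ Ioo (-1 : ℝ) 1) :
    HasDerivAt tanOfSin (1 / √(1 - c ^ 2) ^ 3) c := by
  have hpos := one_sub_sq_pos_of_mem_Ioo hc
  have hsqrt := Real.sqrt_pos.2 hpos
  refine ((hasDerivAt_id c).div (hasDerivAt_sqrt_one_sub_sq hc) hsqrt.ne').congr_deriv ?_
  simp only [id, tanOfSin]
  field_simp
  rw [Real.sq_sqrt hpos.le]
  ring

theorem strictMonoOn_tanOfSin : StrictMonoOn tanOfSin (Ioo (-1) 1) :=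
  strictMonoOn_of_hasDerivWithinAt_pos (convex_Ioo _ _)
    (HasDerivAt.continuousOn fun _ hc => hasDerivAt_tanOfSin hc)
    (fun _ hc => (hasDerivAt_tanOfSin (interior_subset hc)).hasDerivWithinAt) fun _ hc => by
      have := Real.sqrt_pos.2 (one_sub_sq_pos_of_mem_Ioo (interior_subset hc))
      positivity

theorem tanOfSin_le_tanOfSin {c c' : ℝ} (hc : 0 ≤ c) (hcc' : c ≤ c') (hc' : c' < 1) :
    tanOfSin c ≤ tanOfSin c' :=
  strictMonoOn_tanOfSin.monotoneOn ⟨by linarith, by linarith⟩ ⟨by linarith, hc'⟩ hcc'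

theorem mul_div_one_sub_sq_le_tanOfSin_mul {σ c : ℝ} (hσ : 0 ≤ σ) (hσc : σ ≤ c) (hc : c < 1) :
    c * σ / (1 - σ ^ 2) ≤ tanOfSin c * tanOfSin σ := by
  have hcpos := Real.sqrt_pos.2 (one_sub_sq_pos_of_mem_Ioo (c := c) ⟨by linarith, hc⟩)
  calc c * σ / (1 - σ ^ 2)
    _ = c / √(1 - σ ^ 2) * tanOfSin σ := by
      rw [tanOfSin, div_mul_div_comm, Real.mul_self_sqrt]
      exact (one_sub_sq_pos_of_mem_Ioo ⟨by linarith, by linarith⟩).le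
    _ ≤ tanOfSin c * tanOfSin σ := by
      have hc₀ : 0 ≤ c := hσ.trans hσc
      unfold tanOfSin
      gcongr

/-! ### The Bregman divergence of the profile -/

/-- The part of `F` that depends on the first coordinate `s` alone, `s² / 2` included, written in
terms of `c = √(1 - s²)`. -/
def profile (lam c : ℝ) : ℝ :=
  (1 - c ^ 2) / 2 - lam * Real.log (1 + c) + lam * c + (lam - 1) / 2 * Real.log (1 - c ^ 2)

/-- Minus the derivative of `profile` with respect to `s = √(1 - c²)`. -/
def slope (lam c : ℝ) : ℝ := tanOfSin c * (c - lam)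

/-- The Bregman divergence of `profile`, seen as a function of `s = √(1 - c²)`, between the points
with parameters `c` and `σ`. -/
def divergence (lam σ c : ℝ) : ℝ :=
  profile lam c - profile lam σ + slope lam σ * (√(1 - c ^ 2) - √(1 - σ ^ 2))

@[simp]
theorem divergence_self (lam σ : ℝ) : divergence lam σ σ = 0 := by simp [divergence]

theorem hasDerivAt_profile (lam : ℝ) {c : ℝ} (hc : c ∈ Ioo (-1 : ℝ) 1) :
    HasDerivAt (profile lam) (tanOfSin c * slope lam c) c := by
  have hadd : 1 + c ≠ 0 := by linarith [hc.1]
  have hsub : 1 - c ≠ 0 := by linarith [hc.2]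
  have hsq := hasDerivAt_one_sub_sq c
  refine ((((hsq.div_const 2).sub ((((hasDerivAt_id c).const_add 1).log hadd).const_mul lam)).add
    ((hasDerivAt_id c).const_mul lam)).add
      ((hsq.log (one_sub_sq_pos_of_mem_Ioo hc).ne').const_mul ((lam - 1) / 2))).congr_deriv ?_
  rw [slope, ← mul_assoc, ← sq, tanOfSin_sq hc, show 1 - c ^ 2 = (1 - c) * (1 + c) by ring, id]
  field_simp
  ring

theorem hasDerivAt_divergence (lam σ : ℝ) {c : ℝ} (hc : c ∈ Ioo (-1 : ℝ) 1) :
    HasDerivAt (divergence lam σ) (tanOfSin c * (slope lam c - slope lam σ)) c := by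
  refine (((hasDerivAt_profile lam hc).sub_const _).add
    (((hasDerivAt_sqrt_one_sub_sq hc).sub_const _).const_mul _)).congr_deriv ?_
  ring

theorem slope_lt_slope_of_le_left {lam c c' : ℝ} (hc : 0 ≤ c) (hcc' : c < c') (hc' : c' < 1)
    (hlam : lam ≤ c) : slope lam c < slope lam c' :=
  mul_lt_mul'' (strictMonoOn_tanOfSin ⟨by linarith, by linarith⟩ ⟨by linarith, hc'⟩ hcc')
    (by linarith) (tanOfSin_nonneg hc) (by linarith)

theorem slope_lt_slope_of_le_right {lam c c' : ℝ} (hc : 0 < c) (hcc' : c < c') (hc' : c' < 1)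
    (hlam : lam ≤ c') : slope lam c < slope lam c' := by
  rcases lt_or_ge c lam with hlt | hge
  · calc slope lam c
      _ < 0 := mul_neg_of_pos_of_neg (tanOfSin_pos hc (by linarith)) (by linarith)
      _ ≤ slope lam c' := mul_nonneg (tanOfSin_nonneg (by linarith)) (by linarith)
  · exact slope_lt_slope_of_le_left hc.le hcc' hc' hge

theorem divergence_pos {lam σ c : ℝ} (hlamσ : lam ≤ σ) (hσ₀ : 0 ≤ σ) (hσ₁ : σ < 1)
    (hc₀ : 0 ≤ c) (hc₁ : c < 1) (hne : c ≠ σ) : 0 < divergence lam σ c := by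
  rw [← divergence_self lam σ]
  rcases lt_or_gt_of_ne hne with hlt | hgt
  · refine strictAntiOn_of_hasDerivWithinAt_neg (convex_Icc c σ)
      (HasDerivAt.continuousOn fun x hx =>
        hasDerivAt_divergence lam σ ⟨by linarith [hx.1], by linarith [hx.2]⟩)
      (fun x hx => (hasDerivAt_divergence lam σ ?_).hasDerivWithinAt) (fun x hx => ?_)
      (left_mem_Icc.2 hlt.le) (right_mem_Icc.2 hlt.le) hlt
    all_goals obtain ⟨hcx, hxσ⟩ := interior_Icc.subset hx
    · exact ⟨by linarith, by linarith⟩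
    · exact mul_neg_of_pos_of_neg (tanOfSin_pos (by linarith) (by linarith))
        (sub_neg.2 (slope_lt_slope_of_le_right (by linarith) hxσ hσ₁ hlamσ))
  · refine strictMonoOn_of_hasDerivWithinAt_pos (convex_Icc σ c)
      (HasDerivAt.continuousOn fun x hx =>
        hasDerivAt_divergence lam σ ⟨by linarith [hx.1], by linarith [hx.2]⟩)
      (fun x hx => (hasDerivAt_divergence lam σ ?_).hasDerivWithinAt) (fun x hx => ?_)
      (left_mem_Icc.2 hgt.le) (right_mem_Icc.2 hgt.le) hgt
    all_goals obtain ⟨hσx, hxc⟩ := interior_Icc.subset hx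
    · exact ⟨by linarith, by linarith⟩
    · exact mul_pos (tanOfSin_pos (by linarith) (by linarith))
        (sub_pos.2 (slope_lt_slope_of_le_left hσ₀ hσx (by linarith) hlamσ))

theorem neg_half_sub_le_tanOfSin_mul_slope_sub {lam σ c : ℝ} (hlam : lam ≤ 1) (hσ : 0 ≤ σ)
    (hσc : σ ≤ c) (hc : c < 1) :
    -((c - σ) / 2) ≤ tanOfSin c * (slope lam c - slope lam σ) := by
  have hσ₁ : 1 - σ ≠ 0 := by linarith
  have hc₁ : 1 - c ≠ 0 := by linarith
  have hc₂ : 0 < 1 + c := by linarith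
  have hworst : tanOfSin c * (slope 1 c - slope 1 σ) ≤
      tanOfSin c * (slope lam c - slope lam σ) := by
    have hk := tanOfSin_le_tanOfSin hσ hσc hc
    refine mul_le_mul_of_nonneg_left ?_ (tanOfSin_nonneg (hσ.trans hσc))
    unfold slope
    nlinarith
  have hrational : c * (c - σ) / ((1 + c) * (1 + σ)) ≤ (c - σ) / 2 := by
    rw [div_le_div_iff₀ (by positivity) two_pos]
    nlinarith [mul_nonneg (sub_nonneg.2 hσc) (show 0 ≤ 1 - c + σ + c * σ by nlinarith)]
  calc -((c - σ) / 2)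
    _ ≤ -(c * (c - σ) / ((1 + c) * (1 + σ))) := neg_le_neg hrational
    _ = c * σ / (1 - σ ^ 2) * (1 - σ) - c ^ 2 / (1 - c ^ 2) * (1 - c) := by
      rw [show 1 - c ^ 2 = (1 - c) * (1 + c) by ring, show 1 - σ ^ 2 = (1 - σ) * (1 + σ) by ring]
      field_simp
      ring
    _ ≤ tanOfSin c * tanOfSin σ * (1 - σ) - tanOfSin c ^ 2 * (1 - c) := by
      rw [tanOfSin_sq ⟨by linarith, hc⟩]
      gcongr
      · linarith
      · exact mul_div_one_sub_sq_le_tanOfSin_mul hσ hσc hc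
    _ = tanOfSin c * (slope 1 c - slope 1 σ) := by unfold slope; ring
    _ ≤ tanOfSin c * (slope lam c - slope lam σ) := hworst

theorem neg_quarter_sq_le_divergence {lam σ c : ℝ} (hσ : 0 ≤ σ) (hσlam : σ ≤ lam) (hlam : lam < 1)
    (hσc : σ ≤ c) (hc : c < 1) : -((lam - σ) ^ 2 / 4) ≤ divergence lam σ c := by
  have hmono : MonotoneOn (fun x => divergence lam σ x + (x - σ) ^ 2 / 4) (Ico σ 1) := by
    refine monotoneOn_of_hasDerivAt_nonneg (convex_Ico σ 1)
      (f' := fun x => tanOfSin x * (slope lam x - slope lam σ) + (x - σ) / 2)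
      (fun x hx => ?_) fun x hx => ?_
    · refine ((hasDerivAt_divergence lam σ ⟨by linarith [hx.1], hx.2⟩).add
        ((((hasDerivAt_id x).sub_const σ).pow 2).div_const 4)).congr_deriv ?_
      simp only [id]
      ring
    · linarith [neg_half_sub_le_tanOfSin_mul_slope_sub hlam.le hσ hx.1 hx.2]
  have hbefore : ∀ x ∈ Icc σ lam, -((lam - σ) ^ 2 / 4) ≤ divergence lam σ x := fun x hx => by
    have := hmono ⟨le_rfl, by linarith⟩ ⟨hx.1, by linarith [hx.2]⟩ hx.1
    simp only [divergence_self, sub_self] at this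
    nlinarith [hx.1, hx.2]
  rcases le_total c lam with hle | hge
  · exact hbefore c ⟨hσc, hle⟩
  · have hafter : MonotoneOn (divergence lam σ) (Ico lam 1) := by
      refine monotoneOn_of_hasDerivAt_nonneg (convex_Ico lam 1)
        (fun x hx => hasDerivAt_divergence lam σ ⟨by linarith [hx.1], hx.2⟩) fun x hx => ?_
      have hx₀ : 0 ≤ tanOfSin x := tanOfSin_nonneg (by linarith [hx.1])
      have hslope_x : 0 ≤ slope lam x := mul_nonneg hx₀ (sub_nonneg.2 hx.1)
      have hslope_σ : slope lam σ ≤ 0 :=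
        mul_nonpos_of_nonneg_of_nonpos (tanOfSin_nonneg hσ) (sub_nonpos.2 hσlam)
      exact mul_nonneg hx₀ (by linarith)
    exact (hbefore lam ⟨hσlam, le_rfl⟩).trans (hafter ⟨le_rfl, hlam⟩ ⟨hge, hc⟩ hge)

theorem hasDerivAt_slope (lam : ℝ) {c : ℝ} (hc : c ∈ Ioo (-1 : ℝ) 1) :
    HasDerivAt (slope lam) ((2 * c - c ^ 3 - lam) / √(1 - c ^ 2) ^ 3) c := by
  have hpos := one_sub_sq_pos_of_mem_Ioo hc
  refine ((hasDerivAt_tanOfSin hc).mul ((hasDerivAt_id c).sub_const lam)).congr_deriv ?_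
  simp only [id, tanOfSin]
  field_simp
  rw [Real.sq_sqrt hpos.le]
  ring

theorem slope_le_max {lam a b c : ℝ} (hlam : lam ≤ 1) (ha : 0 ≤ a) (hb : b < 1)
    (hc : c ∈ Icc a b) : slope lam c ≤ max (slope lam a) (slope lam b) := by
  have hmin : min (-slope lam a) (-slope lam b) ≤ -slope lam c := by
    refine min_le_of_hasDerivAt_of_neg_imp_nonpos (f := fun x => -slope lam x)
      (fun x hx => (hasDerivAt_slope lam ⟨by linarith [hx.1], by linarith [hx.2]⟩).neg)
      (fun x hx y hy hneg => ?_) hc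
    have hsqrt {z : ℝ} (hz₀ : 0 ≤ z) (hz₁ : z < 1) : 0 < √(1 - z ^ 2) ^ 3 :=
      pow_pos (Real.sqrt_pos.2 (one_sub_sq_pos_of_mem_Ioo ⟨by linarith, hz₁⟩)) 3
    have hx₀ : 0 ≤ x := ha.trans hx.1
    have hy₁ : y < 1 := hy.2.trans_lt hb
    have hx_pos : 0 < 2 * x - x ^ 3 - lam := by
      rwa [neg_neg_iff_pos, div_pos_iff_of_pos_right (hsqrt hx₀ (hy.1.trans_lt hy₁))] at hneg
    refine neg_nonpos.2 (div_nonneg ?_ (hsqrt (hx₀.trans hy.1) hy₁).le)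
    rcases le_total (y ^ 2 + y) 1 with hsmall | hlarge
    · nlinarith [mul_nonneg (sub_nonneg.2 hy.1)
        (show 0 ≤ 2 - y ^ 2 - y * x - x ^ 2 by nlinarith [hy.1])]
    · nlinarith [mul_nonneg (sub_nonneg.2 hy₁.le) (sub_nonneg.2 hlarge)]
  rwa [min_neg_neg, neg_le_neg_iff] at hmin

theorem min_divergence_zero_le_divergence {lam σ c : ℝ} (hlam : lam ≤ 1) (hσ : σ < 1)
    (hc : c ∈ Icc 0 σ) : min (divergence lam σ 0) 0 ≤ divergence lam σ c := by
  suffices hmin : min (divergence lam σ 0) (divergence lam σ σ) ≤ divergence lam σ c by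
    rwa [divergence_self] at hmin
  refine min_le_of_hasDerivAt_of_neg_imp_nonpos
    (fun x hx => hasDerivAt_divergence lam σ ⟨by linarith [hx.1], by linarith [hx.2]⟩)
    (fun x hx y hy hneg => ?_) hc
  have hslope_lt : slope lam x < slope lam σ :=
    sub_neg.1 (neg_of_mul_neg_right hneg (tanOfSin_nonneg hx.1))
  have hslope_le : slope lam y ≤ slope lam σ := by
    simpa only [max_eq_right hslope_lt.le] using slope_le_max hlam hx.1 hσ hy
  exact mul_nonpos_of_nonneg_of_nonpos (tanOfSin_nonneg (hx.1.trans hy.1)) (sub_nonpos.2 hslope_le)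

/-- The divergence `divergence σ σ 0`, which is also the amount by which the entropy of a
`±1`-valued random variable of mean `σ` falls short of `log 2 - σ² / 2`. -/
def entropyDefect (σ : ℝ) : ℝ :=
  ((1 + σ) * Real.log (1 + σ) + (1 - σ) * Real.log (1 - σ) - σ ^ 2) / 2

theorem divergence_zero {σ : ℝ} (lam : ℝ) (hσ : σ ∈ Ioo (-1 : ℝ) 1) :
    divergence lam σ 0 =
      entropyDefect σ - (lam - σ) * (tanOfSin σ - Real.artanh σ) := by
  have hadd : 1 + σ ≠ 0 := by linarith [hσ.1]
  have hsub : 1 - σ ≠ 0 := by linarith [hσ.2]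
  have hsqrt := (Real.sqrt_pos.2 (one_sub_sq_pos_of_mem_Ioo hσ)).ne'
  have htan : tanOfSin σ * √(1 - σ ^ 2) = σ := div_mul_cancel₀ σ hsqrt
  have hlog : Real.log (1 - σ ^ 2) = Real.log (1 + σ) + Real.log (1 - σ) := by
    rw [← Real.log_mul hadd hsub]
    ring_nf
  simp only [divergence, profile, slope, entropyDefect, artanh_eq_log_sub_log hσ, hlog]
  norm_num
  linear_combination (lam - σ) * htan

theorem hasDerivAt_entropyDefect {σ : ℝ} (hσ : σ ∈ Ioo (-1 : ℝ) 1) :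
    HasDerivAt entropyDefect (Real.artanh σ - σ) σ := by
  have hadd : 1 + σ ≠ 0 := by linarith [hσ.1]
  have hsub : 1 - σ ≠ 0 := by linarith [hσ.2]
  refine ((((Real.hasDerivAt_mul_log hadd).comp σ ((hasDerivAt_id σ).const_add 1)).add
    ((Real.hasDerivAt_mul_log hsub).comp σ ((hasDerivAt_id σ).const_sub 1))).sub
      ((hasDerivAt_id σ).pow 2)).div_const 2 |>.congr_deriv ?_
  rw [artanh_eq_log_sub_log hσ]
  simp only [id]
  ring

theorem hasDerivAt_tanOfSin_sub_artanh {σ : ℝ} (hσ : σ ∈ Ioo (-1 : ℝ) 1) :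
    HasDerivAt (fun σ => tanOfSin σ - Real.artanh σ)
      ((1 - √(1 - σ ^ 2)) / √(1 - σ ^ 2) ^ 3) σ := by
  have hpos := one_sub_sq_pos_of_mem_Ioo hσ
  have hsqrt := Real.sqrt_pos.2 hpos
  refine ((hasDerivAt_tanOfSin hσ).sub (hasDerivAt_artanh hσ)).congr_deriv ?_
  rw [← Real.sq_sqrt hpos.le, Real.sqrt_sq hsqrt.le]
  field_simp

theorem pow_four_div_twelve_le_entropyDefect {σ : ℝ} (hσ₀ : 0 ≤ σ) (hσ₁ : σ < 1) :
    σ ^ 4 / 12 ≤ entropyDefect σ := by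
  have hmono : MonotoneOn (fun x => entropyDefect x - x ^ 4 / 12) (Ico 0 1) := by
    refine monotoneOn_of_hasDerivAt_nonneg (convex_Ico 0 1)
      (f' := fun x => Real.artanh x - x - x ^ 3 / 3) (fun x hx => ?_) fun x hx => ?_
    · refine ((hasDerivAt_entropyDefect ⟨by linarith [hx.1], hx.2⟩).sub
        (((hasDerivAt_id x).pow 4).div_const 12)).congr_deriv ?_
      simp only [id]
      ring
    · linarith [add_cube_div_three_le_artanh hx.1 hx.2]
  simpa [entropyDefect] using hmono (left_mem_Ico.2 one_pos) ⟨hσ₀, hσ₁⟩ hσ₀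

theorem sqrt_one_sub_four_fifths_sq : √(1 - (4 / 5 : ℝ) ^ 2) = 3 / 5 := by
  rw [show 1 - (4 / 5 : ℝ) ^ 2 = (3 / 5) ^ 2 by norm_num, Real.sqrt_sq (by norm_num)]

theorem tanOfSin_four_fifths : tanOfSin (4 / 5) = 4 / 3 := by
  rw [tanOfSin, sqrt_one_sub_four_fifths_sq]
  norm_num

theorem artanh_four_fifths : Real.artanh (4 / 5) = 2 * Real.artanh (1 / 2) := by
  rw [Real.artanh_eq_half_log (by norm_num), Real.artanh_eq_half_log (by norm_num),
    show ((1 + 4 / 5) / (1 - 4 / 5) : ℝ) = ((1 + 1 / 2) / (1 - 1 / 2)) ^ 2 by norm_num,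
    Real.log_pow]
  push_cast
  ring

theorem tanOfSin_sub_artanh_le {σ : ℝ} (hσ : σ ∈ Icc 0 (4 / 5)) :
    tanOfSin σ - Real.artanh σ ≤ σ ^ 3 / 2 := by
  suffices hmin : min 0 ((4 / 5 : ℝ) ^ 3 / 2 - (tanOfSin (4 / 5) - Real.artanh (4 / 5))) ≤
      σ ^ 3 / 2 - (tanOfSin σ - Real.artanh σ) by
    have hend := add_cube_div_three_le_artanh (x := 1 / 2) (by norm_num) (by norm_num)
    rw [tanOfSin_four_fifths, artanh_four_fifths, min_eq_left (by linarith)] at hmin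
    linarith
  have hderiv {x : ℝ} (hx : x ∈ Icc 0 (4 / 5)) :
      HasDerivAt (fun x => x ^ 3 / 2 - (tanOfSin x - Real.artanh x))
        ((1 - √(1 - x ^ 2)) * (3 / 2 * (1 + √(1 - x ^ 2)) - 1 / √(1 - x ^ 2) ^ 3)) x := by
    have hx' : x ∈ Ioo (-1 : ℝ) 1 := ⟨by linarith [hx.1], by linarith [hx.2]⟩
    refine ((((hasDerivAt_id x).pow 3).div_const 2).sub
      (hasDerivAt_tanOfSin_sub_artanh hx')).congr_deriv ?_
    have hsq := Real.sq_sqrt (one_sub_sq_pos_of_mem_Ioo hx').le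
    simp only [id]
    linear_combination 3 / 2 * hsq
  have hsign : ∀ x ∈ Icc (0 : ℝ) (4 / 5), ∀ y ∈ Icc x (4 / 5),
      (1 - √(1 - x ^ 2)) * (3 / 2 * (1 + √(1 - x ^ 2)) - 1 / √(1 - x ^ 2) ^ 3) < 0 →
      (1 - √(1 - y ^ 2)) * (3 / 2 * (1 + √(1 - y ^ 2)) - 1 / √(1 - y ^ 2) ^ 3) ≤ 0 := by
    intro x hx y hy hneg
    have hone_sub (z : ℝ) : 0 ≤ 1 - √(1 - z ^ 2) :=
      sub_nonneg.2 (Real.sqrt_le_one.2 (by nlinarith))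
    have hy₀ : 0 < √(1 - y ^ 2) :=
      Real.sqrt_pos.2 (one_sub_sq_pos_of_mem_Ioo ⟨by linarith [hx.1, hy.1], by linarith [hy.2]⟩)
    have hle : √(1 - y ^ 2) ≤ √(1 - x ^ 2) := by
      have := hx.1
      have := hy.1
      gcongr
    have hfactor := neg_of_mul_neg_right hneg (hone_sub x)
    refine mul_nonpos_of_nonneg_of_nonpos (hone_sub y) (le_trans ?_ hfactor.le)
    gcongr
  simpa [tanOfSin] using min_le_of_hasDerivAt_of_neg_imp_nonpos (fun x hx => hderiv hx) hsign hσ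

theorem one_sub_mul_tanOfSin_sub_artanh_lt_entropyDefect {σ : ℝ} (hσ : σ ∈ Ico (4 / 5) 1) :
    (1 - σ) * (tanOfSin σ - Real.artanh σ) < entropyDefect σ := by
  have hmono : MonotoneOn
      (fun x => entropyDefect x - (1 - x) * (tanOfSin x - Real.artanh x)) (Ico (4 / 5) 1) := by
    refine monotoneOn_of_hasDerivAt_nonneg (convex_Ico _ _)
      (f' := fun x => (1 - √(1 - x ^ 2)) * ((1 - x) * (x ^ 2 + x - 1)) / √(1 - x ^ 2) ^ 3)
      (fun x hx => ?_) fun x hx => ?_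
    · have hx' : x ∈ Ioo (-1 : ℝ) 1 := ⟨by linarith [hx.1], hx.2⟩
      have hpos := one_sub_sq_pos_of_mem_Ioo hx'
      refine ((hasDerivAt_entropyDefect hx').sub (((hasDerivAt_id x).const_sub 1).mul
        (hasDerivAt_tanOfSin_sub_artanh hx'))).congr_deriv ?_
      have hsq := Real.sq_sqrt hpos.le
      simp only [id, tanOfSin]
      field_simp
      linear_combination x * (1 - √(1 - x ^ 2)) * hsq
    · have hroot : √(1 - x ^ 2) ≤ 1 := Real.sqrt_le_one.2 (by nlinarith)
      exact div_nonneg (mul_nonneg (by linarith) (mul_nonneg (by linarith [hx.2])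
        (by nlinarith [hx.1]))) (by positivity)
  have hstart : (1 - 4 / 5) * (tanOfSin (4 / 5) - Real.artanh (4 / 5)) < entropyDefect (4 / 5) := by
    -- `artanh (2 / 7) = log (9 / 5) / 2`
    have hlog := add_cube_div_three_le_artanh (x := 2 / 7) (by norm_num) (by norm_num)
    rw [Real.artanh_eq_half_log (by norm_num)] at hlog
    rw [tanOfSin_four_fifths, artanh_eq_log_sub_log (by norm_num), entropyDefect]
    norm_num at hlog ⊢
    linarith
  linarith [hmono (left_mem_Ico.2 (by norm_num)) hσ hσ.1]

theorem neg_half_sq_lt_divergence_zero {lam σ : ℝ} (hσ : 0 < σ) (hσlam : σ ≤ lam) (hlam : lam < 1) :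
    -((lam - σ) ^ 2 / 2) < divergence lam σ 0 := by
  have hσ₁ : σ < 1 := hσlam.trans_lt hlam
  have hexcess := pow_four_div_twelve_le_entropyDefect hσ.le hσ₁
  have hσ₄ : 0 < σ ^ 4 := by positivity
  rw [divergence_zero lam ⟨by linarith, hσ₁⟩]
  -- Any threshold near `4 / 5` would do; at this one `√(1 - σ ^ 2)` is rational.
  rcases le_total σ (4 / 5) with hsmall | hlarge
  · have htan := mul_le_mul_of_nonneg_left (tanOfSin_sub_artanh_le ⟨hσ.le, hsmall⟩)
      (sub_nonneg.2 hσlam)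
    nlinarith [sq_nonneg (lam - σ - σ ^ 3 / 2),
      mul_nonneg hσ₄.le (show 0 ≤ 16 / 25 - σ ^ 2 by nlinarith)]
  · have htan := one_sub_mul_tanOfSin_sub_artanh_lt_entropyDefect ⟨hlarge, hσ₁⟩
    rcases le_total (tanOfSin σ - Real.artanh σ) 0 with hneg | hpos
    · nlinarith [mul_nonneg (sub_nonneg.2 hσlam) (neg_nonneg.2 hneg)]
    · nlinarith [mul_le_mul_of_nonneg_right (sub_le_sub_right hlam.le σ) hpos]

theorem neg_half_sq_lt_divergence {lam σ c : ℝ} (hlam : lam < 1) (hσ : σ ∈ Ico 0 1)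
    (hc : c ∈ Ico 0 1) (hne : ¬(σ = lam ∧ c = lam)) :
    -((σ - lam) ^ 2 / 2) < divergence lam σ c := by
  rcases le_or_gt lam σ with hge | hlt
  · by_cases hcσ : c = σ
    · rw [hcσ, divergence_self, neg_neg_iff_pos]
      have hσlam : σ - lam ≠ 0 := sub_ne_zero.2 fun h => hne ⟨h, hcσ.trans h⟩
      positivity
    · nlinarith [divergence_pos hge hσ.1 hσ.2 hc.1 hc.2 hcσ]
  · have hsq : 0 < (lam - σ) ^ 2 := pow_pos (sub_pos.2 hlt) 2
    rw [show (σ - lam) ^ 2 = (lam - σ) ^ 2 by ring]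
    rcases le_or_gt σ c with hσc | hcσ
    · linarith [neg_quarter_sq_le_divergence hσ.1 hlt.le hlam hσc hc.2]
    · have hzero := neg_half_sq_lt_divergence_zero (hc.1.trans_lt hcσ) hlt.le hlam
      exact (lt_min hzero (by linarith)).trans_le
        (min_divergence_zero_le_divergence hlam.le hσ.2 ⟨hc.1, hcσ.le⟩)

/-! ### The Douglas–Rachford step -/

section Geometry

variable {d : ℕ}

theorem Delta_subset_Hplus : Delta d ⊆ Hplus d := fun _ hy => hy.1

theorem norm_sub_smul_e_sq (y : Euc d) (b : ℝ) (j : Fin (d + 2)) :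
    ‖y - b • e d j‖ ^ 2 = ‖y‖ ^ 2 - 2 * b * y j + b ^ 2 := by
  rw [norm_sub_sq_real, inner_smul_right, norm_smul, e, EuclideanSpace.inner_single_right,
    PiLp.norm_single, mul_pow, Real.norm_eq_abs, sq_abs]
  simp only [conj_trivial, norm_one]
  ring

theorem coord_sq_add_coord_sq_le_norm_sq (y : Euc d) : y 0 ^ 2 + y 1 ^ 2 ≤ ‖y‖ ^ 2 := by
  rw [EuclideanSpace.real_norm_sq_eq, ← Finset.sum_pair (f := fun i => y i ^ 2) zero_ne_one]
  exact Finset.sum_le_univ_sum_of_nonneg fun i => sq_nonneg (y i)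

theorem coord_le_norm (y : Euc d) (j : Fin (d + 2)) : y j ≤ ‖y‖ :=
  (le_abs_self _).trans (PiLp.norm_apply_le y j)

theorem norm_pos_of_mem_Hplus {y : Euc d} (hy : y ∈ Hplus d) : 0 < ‖y‖ :=
  lt_of_lt_of_le hy (coord_le_norm y 0)

theorem DR_eq (lam : ℝ) (y : Euc d) :
    DR d lam y =
      (1 - 1 / ‖y‖) • y + (y 0 / ‖y‖ - (1 - 1 / ‖y‖) * y 0) • e d 0 + lam • e d 1 := by
  have hsum (i : Fin (d + 2)) :
      (∑ j ∈ Finset.univ.filter (fun j : Fin (d + 2) => 2 ≤ (j : ℕ)),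
        ((1 - 1 / ‖y‖) * y j) • e d j) i = if 2 ≤ (i : ℕ) then (1 - 1 / ‖y‖) * y i else 0 := by
    rw [WithLp.ofLp_sum, Finset.sum_apply]
    simp [e]
  ext i
  rw [DR, PiLp.add_apply, hsum]
  refine Fin.cases ?_ (fun i => Fin.cases ?_ (fun i => ?_) i) i
  · simp [e]
  · simp [e]
  · have hne : i.succ.succ ≠ 1 := Fin.ne_of_val_ne (by simp)
    simp [e, hne]

theorem DR_zero (lam : ℝ) (y : Euc d) : DR d lam y 0 = y 0 / ‖y‖ := by
  rw [DR_eq]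
  simp [e]

theorem DR_mem_Delta (lam : ℝ) {y : Euc d} (hy : y ∈ Hplus d) : DR d lam y ∈ Delta d := by
  have hnorm := norm_pos_of_mem_Hplus hy
  rw [Delta, mem_ofPred_eq, DR_zero]
  exact ⟨div_pos hy hnorm, (div_le_one hnorm).2 (coord_le_norm y 0)⟩

theorem continuousOn_F (lam : ℝ) : ContinuousOn (F d lam) (Hplus d) := by
  have hlog : ContinuousOn (fun y : Euc d => Real.log (1 + √(1 - y 0 ^ 2))) (Hplus d) :=
    ContinuousOn.log (by fun_prop) fun y _ => by positivity
  have hlog_coord : ContinuousOn (fun y : Euc d => Real.log (y 0)) (Hplus d) :=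
    ContinuousOn.log (by fun_prop) fun y hy => ne_of_gt hy
  unfold F
  fun_prop

theorem continuousOn_DR (lam : ℝ) : ContinuousOn (DR d lam) (Hplus d) := by
  have hnorm (y : Euc d) (hy : y ∈ Hplus d) : ‖y‖ ≠ 0 := (norm_pos_of_mem_Hplus hy).ne'
  rw [funext (DR_eq (d := d) lam)]
  fun_prop (disch := assumption)

/-- For `y ∈ Δ`, the sine of the angle in `[0, π/2)` whose cosine is the first coordinate of `y`. -/
def sineCoord (y : Euc d) : ℝ := √(1 - y 0 ^ 2)

theorem sineCoord_sq {y : Euc d} (hy : y ∈ Delta d) : sineCoord y ^ 2 = 1 - y 0 ^ 2 :=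
  Real.sq_sqrt (by nlinarith [hy.1, hy.2])

theorem sineCoord_mem_Ico {y : Euc d} (hy : y ∈ Delta d) : sineCoord y ∈ Ico 0 1 :=
  ⟨Real.sqrt_nonneg _, (Real.sqrt_lt' one_pos).2 (by nlinarith [hy.1])⟩

theorem sqrt_one_sub_sineCoord_sq {y : Euc d} (hy : y ∈ Delta d) :
    √(1 - sineCoord y ^ 2) = y 0 := by
  rw [sineCoord_sq hy, sub_sub_cancel, Real.sqrt_sq hy.1.le]

theorem F_eq_add_profile (lam : ℝ) {y : Euc d} (hy : y ∈ Delta d) :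
    F d lam y = (‖y - lam • e d 1‖ ^ 2 - y 0 ^ 2) / 2 + profile lam (sineCoord y) := by
  rw [F, profile, sineCoord_sq hy, sub_sub_cancel, Real.log_pow, sineCoord]
  push_cast
  ring

theorem norm_mul_sineCoord_DR_sq (lam : ℝ) {y : Euc d} (hy : y ∈ Hplus d) :
    (‖y‖ * sineCoord (DR d lam y)) ^ 2 = ‖y‖ ^ 2 - y 0 ^ 2 := by
  have hnorm := (norm_pos_of_mem_Hplus hy).ne'
  rw [mul_pow, sineCoord_sq (DR_mem_Delta lam hy), DR_zero]
  field_simp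

theorem coord_one_le_norm_mul_sineCoord_DR (lam : ℝ) {y : Euc d} (hy : y ∈ Hplus d) :
    y 1 ≤ ‖y‖ * sineCoord (DR d lam y) := by
  refine le_of_sq_le_sq ?_ (mul_nonneg (norm_nonneg y) (Real.sqrt_nonneg _))
  linarith [norm_mul_sineCoord_DR_sq lam hy, coord_sq_add_coord_sq_le_norm_sq y]

theorem norm_DR_sub_smul_e_sq (lam : ℝ) (y : Euc d) :
    ‖DR d lam y - lam • e d 1‖ ^ 2 =
      (1 - 1 / ‖y‖) ^ 2 * (‖y‖ ^ 2 - y 0 ^ 2) + DR d lam y 0 ^ 2 := by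
  have hDR : DR d lam y - lam • e d 1 =
      (1 - 1 / ‖y‖) • y - ((1 - 1 / ‖y‖) * y 0 - y 0 / ‖y‖) • e d 0 := by
    rw [DR_eq]
    module
  rw [hDR, norm_sub_smul_e_sq, norm_smul, mul_pow, Real.norm_eq_abs, sq_abs, DR_zero,
    PiLp.smul_apply, smul_eq_mul]
  ring

theorem F_DR (lam : ℝ) {y : Euc d} (hy : y ∈ Hplus d) :
    F d lam (DR d lam y) =
      ((‖y‖ - 1) * sineCoord (DR d lam y)) ^ 2 / 2 + profile lam (sineCoord (DR d lam y)) := by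
  have hnorm := (norm_pos_of_mem_Hplus hy).ne'
  rw [F_eq_add_profile lam (DR_mem_Delta lam hy), norm_DR_sub_smul_e_sq,
    ← norm_mul_sineCoord_DR_sq lam hy]
  field_simp
  ring

theorem F_sub_F_DR (lam : ℝ) {y : Euc d} (hy : y ∈ Delta d) :
    F d lam y - F d lam (DR d lam y) =
      (sineCoord (DR d lam y) - lam) ^ 2 / 2
        + divergence lam (sineCoord (DR d lam y)) (sineCoord y)
        + lam * (‖y‖ * sineCoord (DR d lam y) - y 1) := by
  have hy' := Delta_subset_Hplus hy
  have hDR := DR_mem_Delta lam hy'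
  have hsq := norm_mul_sineCoord_DR_sq lam hy'
  have hslope : slope lam (sineCoord (DR d lam y)) * (y 0 - DR d lam y 0) =
      sineCoord (DR d lam y) * (sineCoord (DR d lam y) - lam) * (‖y‖ - 1) := by
    have hnorm := (norm_pos_of_mem_Hplus hy').ne'
    have hcoord := hy.1.ne'
    rw [slope, tanOfSin, sqrt_one_sub_sineCoord_sq hDR, DR_zero]
    field_simp
  rw [F_DR lam hy', F_eq_add_profile lam hy, norm_sub_smul_e_sq, divergence,
    sqrt_one_sub_sineCoord_sq hDR, sqrt_one_sub_sineCoord_sq hy, hslope]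
  linear_combination -hsq / 2

variable {lam : ℝ}

theorem F_DR_lt_F (hlam₀ : 0 ≤ lam) (hlam₁ : lam < 1) {y : Euc d} (hy : y ∈ Delta d)
    (hne : ¬(sineCoord (DR d lam y) = lam ∧ sineCoord y = lam)) :
    F d lam (DR d lam y) < F d lam y := by
  have hy' := Delta_subset_Hplus hy
  have hdiv := neg_half_sq_lt_divergence hlam₁ (sineCoord_mem_Ico (DR_mem_Delta lam hy'))
    (sineCoord_mem_Ico hy) hne
  have hcross := mul_nonneg hlam₀ (sub_nonneg.2 (coord_one_le_norm_mul_sineCoord_DR lam hy'))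
  linarith [F_sub_F_DR lam hy]

theorem F_DR_le_F (hlam₀ : 0 ≤ lam) (hlam₁ : lam < 1) {y : Euc d} (hy : y ∈ Delta d) :
    F d lam (DR d lam y) ≤ F d lam y := by
  by_cases heq : sineCoord (DR d lam y) = lam ∧ sineCoord y = lam
  · have hcross := mul_nonneg hlam₀
      (sub_nonneg.2 (coord_one_le_norm_mul_sineCoord_DR lam (Delta_subset_Hplus hy)))
    have hdecrease := F_sub_F_DR lam hy
    rw [heq.2, heq.1, divergence_self, sub_self] at hdecrease
    rw [heq.1] at hcross
    linarith
  · exact (F_DR_lt_F hlam₀ hlam₁ hy heq).le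

theorem norm_eq_one_of_sineCoord_DR_eq {y : Euc d} (hy : y ∈ Delta d)
    (heq : sineCoord (DR d lam y) = sineCoord y) : ‖y‖ = 1 := by
  have hcoord : y 0 / ‖y‖ = y 0 := by
    rw [← DR_zero lam, ← sqrt_one_sub_sineCoord_sq (DR_mem_Delta lam (Delta_subset_Hplus hy)), heq,
      sqrt_one_sub_sineCoord_sq hy]
  rwa [div_eq_iff (norm_pos_of_mem_Hplus hy.1).ne', left_eq_mul₀ hy.1.ne'] at hcoord

theorem xStar_zero (lam : ℝ) : xStar d lam 0 = √(1 - lam ^ 2) := by simp [xStar, e]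

theorem norm_xStar (hlam : lam ∈ Icc (-1) 1) : ‖xStar d lam‖ = 1 := by
  have hsq : ‖xStar d lam‖ ^ 2 = 1 := by
    rw [xStar, ← sub_neg_eq_add, ← neg_smul, norm_sub_smul_e_sq, norm_smul, mul_pow,
      Real.norm_eq_abs, sq_abs, Real.sq_sqrt (by nlinarith [hlam.1, hlam.2])]
    simp [e]
  exact (pow_eq_one_iff_of_nonneg (norm_nonneg _) two_ne_zero).1 hsq

theorem DR_xStar (hlam : lam ∈ Icc (-1) 1) : DR d lam (xStar d lam) = xStar d lam := by
  rw [DR_eq, norm_xStar hlam, xStar_zero, xStar]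
  simp

theorem xStar_mem_Delta (hlam : lam ∈ Ioo (-1) 1) : xStar d lam ∈ Delta d := by
  rw [Delta, mem_ofPred_eq, xStar_zero]
  exact ⟨Real.sqrt_pos.2 (one_sub_sq_pos_of_mem_Ioo hlam), Real.sqrt_le_one.2 (by nlinarith)⟩

theorem F_xStar (hlam₀ : 0 ≤ lam) (hlam₁ : lam < 1) :
    F d lam (xStar d lam) = profile lam lam := by
  have hlam : lam ∈ Ioo (-1) 1 := ⟨by linarith, hlam₁⟩
  have hmem := xStar_mem_Delta (d := d) hlam
  have hsine : sineCoord (xStar d lam) = lam := by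
    rw [sineCoord, xStar_zero, Real.sq_sqrt (one_sub_sq_pos_of_mem_Ioo hlam).le, sub_sub_cancel,
      Real.sqrt_sq hlam₀]
  have hfixed := DR_xStar (d := d) (Ioo_subset_Icc_self hlam)
  have hF := F_DR lam (Delta_subset_Hplus hmem)
  rwa [hfixed, hsine, norm_xStar (Ioo_subset_Icc_self hlam), sub_self, zero_mul,
    zero_pow two_ne_zero, zero_div, zero_add] at hF

theorem F_eq_F_xStar_of_F_DR_eq (hlam₀ : 0 ≤ lam) (hlam₁ : lam < 1) {y : Euc d}
    (hy : y ∈ Delta d) (heq : F d lam (DR d lam y) = F d lam y) :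
    F d lam y = F d lam (xStar d lam) := by
  obtain ⟨hDR, hsine⟩ : sineCoord (DR d lam y) = lam ∧ sineCoord y = lam :=
    not_not.1 fun hne => (F_DR_lt_F hlam₀ hlam₁ hy hne).ne heq
  rw [← heq, F_DR lam (Delta_subset_Hplus hy), F_xStar hlam₀ hlam₁, hDR,
    norm_eq_one_of_sineCoord_DR_eq hy (hDR.trans hsine.symm)]
  ring

theorem half_norm_sq_sub_log_le_F (hlam₀ : 0 ≤ lam) (hlam₁ : lam ≤ 1) (y : Euc d) :
    ‖y - lam • e d 1‖ ^ 2 / 2 - (1 - lam) * Real.log (y 0) - Real.log 2 ≤ F d lam y := by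
  have hsqrt : √(1 - y 0 ^ 2) ≤ 1 := Real.sqrt_le_one.2 (by nlinarith)
  have hlog : lam * Real.log (1 + √(1 - y 0 ^ 2)) ≤ 1 * Real.log 2 := by
    gcongr
    · exact Real.log_nonneg (by linarith [Real.sqrt_nonneg (1 - y 0 ^ 2)])
    · linarith
  rw [F]
  linarith [mul_nonneg hlam₀ (Real.sqrt_nonneg (1 - y 0 ^ 2))]

theorem exp_neg_le_coord_of_F_le (hlam₀ : 0 ≤ lam) (hlam₁ : lam < 1) {y : Euc d}
    (hy : y ∈ Delta d) {t : ℝ} (ht : F d lam y ≤ t) :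
    Real.exp (-((t + Real.log 2) / (1 - lam))) ≤ y 0 := by
  rw [← Real.le_log_iff_exp_le hy.1, neg_le, le_div_iff₀ (sub_pos.2 hlam₁)]
  linarith [half_norm_sq_sub_log_le_F hlam₀ hlam₁.le y, sq_nonneg ‖y - lam • e d 1‖]

theorem mem_closedBall_of_F_le (hlam₀ : 0 ≤ lam) (hlam₁ : lam ≤ 1) {y : Euc d}
    (hy : y ∈ Delta d) {t : ℝ} (ht : F d lam y ≤ t) :
    y ∈ closedBall (lam • e d 1) √(2 * (t + Real.log 2)) := by
  rw [mem_closedBall, dist_eq_norm]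
  refine Real.le_sqrt_of_sq_le ?_
  linarith [half_norm_sq_sub_log_le_F hlam₀ hlam₁ y,
    mul_nonneg (sub_nonneg.2 hlam₁) (neg_nonneg.2 (Real.log_nonpos hy.1.le hy.2))]

theorem isCompact_sublevel_F (hlam₀ : 0 ≤ lam) (hlam₁ : lam < 1) (t : ℝ) :
    IsCompact {y ∈ Delta d | F d lam y ≤ t} := by
  set ε := Real.exp (-((t + Real.log 2) / (1 - lam)))
  set slab : Set (Euc d) := {y | y 0 ∈ Icc ε 1}
  have hslab : slab ⊆ Delta d := fun y hy => ⟨(Real.exp_pos _).trans_le hy.1, hy.2⟩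
  have hslab_closed : IsClosed slab := isClosed_Icc.preimage (by fun_prop)
  have hsublevel : {y ∈ Delta d | F d lam y ≤ t} = slab ∩ F d lam ⁻¹' Iic t :=
    Subset.antisymm
      (fun y hy => ⟨⟨exp_neg_le_coord_of_F_le hlam₀ hlam₁ hy.1 hy.2, hy.1.2⟩, hy.2⟩)
      fun y hy => ⟨hslab hy.1, hy.2⟩
  refine isCompact_of_isClosed_isBounded ?_ (isBounded_closedBall.subset fun y hy =>
    mem_closedBall_of_F_le hlam₀ hlam₁.le hy.1 hy.2)
  rw [hsublevel]
  exact ((continuousOn_F lam).mono (hslab.trans Delta_subset_Hplus)).preimage_isClosed_of_isClosed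
    hslab_closed isClosed_Iic

end Geometry

end DouglasRachford

open DouglasRachford

/-- For `λ ∈ [0,1)` there is a continuous positive definite
`α : [0,∞) → [0,∞)` such that `V(T x) ≤ V(x) − α(V(x))` for every `x ∈ H₊`. -/
theorem stmt11 (d : ℕ) (lam : ℝ) (h0 : 0 ≤ lam) (h1 : lam < 1) :
    ∃ a : ℝ → ℝ,
      ContinuousOn a (Ici 0) ∧
      (∀ t : ℝ, 0 ≤ t → 0 ≤ a t) ∧
      (∀ t : ℝ, 0 ≤ t → (a t = 0 ↔ t = 0)) ∧
      ∀ x ∈ Hplus d, V d lam (DR d lam x) ≤ V d lam x - a (V d lam x) := by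
  set f : Euc d → ℝ := fun y => F d lam y - F d lam (xStar d lam)
  set g : Euc d → ℝ := fun y => F d lam y - F d lam (DR d lam y)
  have hlam : lam ∈ Ioo (-1) 1 := ⟨by linarith, h1⟩
  have hF : ContinuousOn (F d lam) (Delta d) := (continuousOn_F lam).mono Delta_subset_Hplus
  have hf : ContinuousOn f (Delta d) := hF.sub continuousOn_const
  have hg : ContinuousOn g (Delta d) :=
    hF.sub (hF.comp ((continuousOn_DR lam).mono Delta_subset_Hplus) fun y hy =>
      DR_mem_Delta lam (Delta_subset_Hplus hy))
  have hcompact : ∀ t, IsCompact {y ∈ Delta d | f y ≤ t} := fun t => by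
    simpa only [f, sub_le_iff_le_add] using isCompact_sublevel_F h0 h1 (t + F d lam (xStar d lam))
  obtain ⟨a, ha_cont, ha_nonneg, ha_zero, ha_le⟩ :=
    exists_continuous_posDef_le_of_isCompact_sublevel hf hg hcompact
      (fun y hy => sub_nonneg.2 (F_DR_le_F h0 h1 hy))
      (fun y hy hgy => sub_eq_zero.2 (F_eq_F_xStar_of_F_DR_eq h0 h1 hy (sub_eq_zero.1 hgy).symm))
      (xStar_mem_Delta hlam) (by simp only [g, DR_xStar (Ioo_subset_Icc_self hlam), sub_self])
  refine ⟨a, ha_cont.continuousOn, fun t _ => ha_nonneg t, fun t _ => ha_zero t, fun x hx => ?_⟩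
  have hdecrease : a (V d lam x) ≤ F d lam (DR d lam x) - F d lam (DR d lam (DR d lam x)) :=
    ha_le (DR d lam x) (DR_mem_Delta lam hx)
  simp only [V] at hdecrease ⊢
  linarith
end
end
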